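/- arXiv:1007.1375 — 7 statements merged into one kernel-verified Lean document; each statement's English description precedes it below -/
import Mathlib

section
/- Let V be a finite set of points in the real plane ℝ², not all contained in a single line, such that |V| is an odd number and V is 3-bounded (every line spanned by two distinct points of V contains at most 3 points of V). Then V spans a simple wedge, i.e., there exist three distinct points a, b, c ∈ V such that both the line through a and b and the line through a and c are simple lines of V. -/
/-- `L_{a,b}` is a simple line of `V`: `a, b` are distinct points of `V` and no
point of `V` other than `a` and `b` is collinear with `a` and `b`. -/
def SimpleLine (V : Set (ℝ × ℝ)) (a b : ℝ × ℝ) : Prop :=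
  a ∈ V ∧ b ∈ V ∧ a ≠ b ∧
    ∀ c ∈ V, Collinear ℝ ({a, b, c} : Set (ℝ × ℝ)) → c = a ∨ c = b

/-- `V` is 3-bounded: for all distinct `a, b ∈ V`, at most `3` points of `V`
are collinear with `a` and `b`. -/
def ThreeBounded (V : Set (ℝ × ℝ)) : Prop :=
  ∀ a ∈ V, ∀ b ∈ V, a ≠ b →
    ({c ∈ V | Collinear ℝ ({a, b, c} : Set (ℝ × ℝ))}).ncard ≤ 3

/-- `x 0, x 1, …, x (t-1)` (corresponding to `x_1, …, x_t`, so `1 ≤ t`) is an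
orbit of the simple line `L_{a,b}` in `V`:
(ℵ) each `x i` is a point of `V` different from `a` and `b`;
(ℶ) the points `x_1, …, x_{t-1}` are pairwise distinct;
(ℷ)/(ℸ) consecutive points are joined alternately through `b` and `a`:
`x_{2m}` is collinear with `b` and `x_{2m-1}`, and `x_{2m+1}` is collinear with
`a` and `x_{2m}` (in the `0`-based indexing below, `x (k+1)` is collinear with
`b` and `x k` for even `k`, and with `a` and `x k` for odd `k`). -/
def IsOrbit (V : Set (ℝ × ℝ)) (a b : ℝ × ℝ) (t : ℕ) (x : ℕ → ℝ × ℝ) : Prop :=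
  1 ≤ t ∧
  (∀ i < t, x i ∈ V ∧ x i ≠ a ∧ x i ≠ b) ∧
  (∀ i < t - 1, ∀ j < t - 1, i ≠ j → x i ≠ x j) ∧
  ∀ k, k + 1 < t →
    (Even k → Collinear ℝ ({b, x k, x (k + 1)} : Set (ℝ × ℝ))) ∧
    (Odd k → Collinear ℝ ({a, x k, x (k + 1)} : Set (ℝ × ℝ)))

/-- An orbit is open if `t = 1`, or `t > 1` and its first and last points differ. -/
def OpenOrbit (V : Set (ℝ × ℝ)) (a b : ℝ × ℝ) (t : ℕ) (x : ℕ → ℝ × ℝ) : Prop :=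
  IsOrbit V a b t x ∧ (t = 1 ∨ (1 < t ∧ x 0 ≠ x (t - 1)))

/-- An orbit is closed if `t > 1` and its first and last points coincide. -/
def ClosedOrbit (V : Set (ℝ × ℝ)) (a b : ℝ × ℝ) (t : ℕ) (x : ℕ → ℝ × ℝ) : Prop :=
  IsOrbit V a b t x ∧ 1 < t ∧ x 0 = x (t - 1)

/-- An orbit is maximal if it cannot be extended by one more point of `V`. -/
def MaximalOrbit (V : Set (ℝ × ℝ)) (a b : ℝ × ℝ) (t : ℕ) (x : ℕ → ℝ × ℝ) : Prop :=
  IsOrbit V a b t x ∧ ¬ ∃ y ∈ V, IsOrbit V a b (t + 1) (Function.update x t y)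

/-!
Sylvester–Gallai provides a simple line `L_{a,b}`. The other points of `V` fall, according to the
line joining them to `a`, into classes of size one (simple lines) and two (lines with three points).
As `V` without `a` has an even number of points, the number of simple lines through `a` is even, so
there is one besides `L_{a,b}`.

For Sylvester–Gallai, Kelly's minimal-distance argument is run with an affine notion of distance,
which makes it work over any ordered field. Fix a linear form `φ` that separates the points of `V`,
think of `ker φ` as the vertical direction, in which a second generic form `ψ` measures lengths, and
choose a point `p` of `V` and a line `L` through two points of `V`, not containing `p`, at minimal
vertical distance. Let `q` be the point of `L` vertically above or below `p`. If `L` contained three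
points of `V`, two of them would lie on the same side of `q`, say `y` strictly between `q` and `x`.
But then the vertical segment from `y` to the line through `p` and `x` is a proper scaled copy of
the segment from `q` to `p`.
-/

open AffineMap Module

section Lines

variable (k : Type*) {E P : Type*} [DivisionRing k] [AddCommGroup E] [Module k E] [AddTorsor E P]

/-- The points of `S` on the line through `a` and `b`, for distinct `a` and `b`. -/
def linePoints (S : Set P) (a b : P) : Set P :=
  {c ∈ S | Collinear k {a, b, c}}

/-- The notion of a simple line (`SimpleLine`) in an arbitrary affine space. -/
def IsOrdinaryLine (S : Set P) (a b : P) : Prop :=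
  a ∈ S ∧ b ∈ S ∧ a ≠ b ∧ ∀ c ∈ S, Collinear k {a, b, c} → c = a ∨ c = b

variable {S : Set P} {a b : P}

lemma pair_subset_linePoints (ha : a ∈ S) (hb : b ∈ S) : {a, b} ⊆ linePoints k S a b := by
  rintro c (rfl | rfl)
  · exact ⟨ha, by simpa [Set.pair_comm b c] using collinear_pair k c b⟩
  · exact ⟨hb, by simpa using collinear_pair k a c⟩

lemma two_le_ncard_linePoints (hS : S.Finite) (ha : a ∈ S) (hb : b ∈ S) (hab : a ≠ b) :
    2 ≤ (linePoints k S a b).ncard := by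
  rw [← Set.ncard_pair hab]
  exact Set.ncard_le_ncard (pair_subset_linePoints k ha hb) (hS.sep _)

lemma isOrdinaryLine_iff_ncard_linePoints_eq_two (ha : a ∈ S) (hb : b ∈ S) (hab : a ≠ b) :
    IsOrdinaryLine k S a b ↔ (linePoints k S a b).ncard = 2 := by
  have hsub := pair_subset_linePoints k ha hb
  constructor
  · rintro ⟨-, -, -, h⟩
    rw [← Set.ncard_pair hab, hsub.antisymm fun c hc ↦ h c hc.1 hc.2]
  · intro h
    have heq : {a, b} = linePoints k S a b :=
      Set.eq_of_subset_of_ncard_le hsub (by rw [h, Set.ncard_pair hab])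
        (Set.finite_of_ncard_ne_zero (by simp [h]))
    exact ⟨ha, hb, hab, fun c hcS hc ↦ heq.ge ⟨hcS, hc⟩⟩

lemma isOrdinaryLine_of_even_ncard_linePoints (hS : S.Finite) (ha : a ∈ S) (hb : b ∈ S)
    (hab : a ≠ b) (heven : Even (linePoints k S a b).ncard)
    (hbd : (linePoints k S a b).ncard ≤ 3) : IsOrdinaryLine k S a b := by
  rw [isOrdinaryLine_iff_ncard_linePoints_eq_two k ha hb hab]
  have := two_le_ncard_linePoints k hS ha hb hab
  grind

variable {k}

lemma mem_affineSpan_pair_iff_collinear {p : P} (hab : a ≠ b) :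
    p ∈ line[k, a, b] ↔ Collinear k {a, b, p} := by
  refine ⟨fun h ↦ ?_, fun h ↦ h.mem_affineSpan_of_mem_of_ne (by simp) (by simp) (by simp) hab⟩
  rw [Set.pair_comm b p, Set.insert_comm a p]
  exact collinear_insert_of_mem_affineSpan_pair h

lemma exists_not_collinear_triple (hS : ¬ Collinear k S) :
    ∃ a ∈ S, ∃ b ∈ S, ∃ p ∈ S, ¬ Collinear k {a, b, p} := by
  contrapose! hS
  rcases S.subsingleton_or_nontrivial with hsub | ⟨a, ha, b, hb, hab⟩
  · rcases hsub.eq_empty_or_singleton with rfl | ⟨x, rfl⟩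
    exacts [collinear_empty k P, collinear_singleton k x]
  · refine (collinear_iff_of_mem ha).2 ⟨b -ᵥ a, fun p hp ↦ ?_⟩
    obtain ⟨t, rfl⟩ := mem_affineSpan_pair_iff_exists_lineMap_eq.1
      ((mem_affineSpan_pair_iff_collinear hab).2 (hS a ha b hb p hp))
    exact ⟨t, rfl⟩

end Lines

section Parity

variable (k : Type*) {E P : Type*} [DivisionRing k] [AddCommGroup E] [Module k E] [AddTorsor E P]

/-- The graph on the points of `S` other than `a` that joins two points when they are seen from `a`
along the same line. It turns counting modulo two into the handshaking lemma. -/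
def collinearityGraph (S : Set P) (a : P) : SimpleGraph ↥(S \ {a}) where
  Adj x y := x ≠ y ∧ Collinear k {a, (x : P), (y : P)}
  symm := ⟨fun x y h ↦ ⟨h.1.symm, Set.pair_comm (x : P) y ▸ h.2⟩⟩
  loopless := ⟨fun _ h ↦ h.1 rfl⟩

variable {S : Set P} {a : P}

lemma image_neighborSet_collinearityGraph (x : ↥(S \ {a})) :
    (↑) '' (collinearityGraph k S a).neighborSet x = linePoints k S a x \ {a, (x : P)} := by
  ext y
  constructor
  · rintro ⟨y, ⟨hne, hcol⟩, rfl⟩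
    exact ⟨⟨y.2.1, hcol⟩, by
      rintro (hya | hyx)
      exacts [y.2.2 hya, hne (Subtype.ext hyx.symm)]⟩
  · rintro ⟨⟨hyS, hcol⟩, hne⟩
    rw [Set.mem_insert_iff, not_or] at hne
    exact ⟨⟨y, hyS, hne.1⟩, ⟨fun h ↦ hne.2 (congrArg Subtype.val h).symm, hcol⟩, rfl⟩

lemma degree_collinearityGraph_add_two (hS : S.Finite) (ha : a ∈ S) (x : ↥(S \ {a}))
    [Fintype ((collinearityGraph k S a).neighborSet x)] :
    (collinearityGraph k S a).degree x + 2 = (linePoints k S a x).ncard := by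
  have hax : a ≠ x := fun h ↦ x.2.2 h.symm
  rw [← SimpleGraph.card_neighborSet_eq_degree, ← Nat.card_eq_fintype_card,
    Nat.card_coe_set_eq, ← Set.ncard_image_of_injective _ Subtype.val_injective,
    image_neighborSet_collinearityGraph, ← Set.ncard_pair hax]
  exact Set.ncard_sdiff_add_ncard_of_subset (pair_subset_linePoints k ha x.2.1) (hS.sep _)

lemma even_ncard_setOf_odd_ncard_linePoints (hS : S.Finite) (ha : a ∈ S) :
    Even {x ∈ S \ {a} | Odd (linePoints k S a x).ncard}.ncard := by
  classical
  have := (hS.sdiff (t := {a})).fintype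
  have himage : (↑) '' {x | Odd ((collinearityGraph k S a).degree x)} =
      {x ∈ S \ {a} | Odd (linePoints k S a x).ncard} := by
    ext x
    constructor
    · rintro ⟨x, hx, rfl⟩
      exact ⟨x.2, by simpa [← degree_collinearityGraph_add_two k hS ha, Nat.odd_add] using hx⟩
    · rintro ⟨hxS, hx⟩
      rw [← degree_collinearityGraph_add_two k hS ha ⟨x, hxS⟩] at hx
      exact ⟨⟨x, hxS⟩, by simpa [Nat.odd_add] using hx, rfl⟩
  rw [← himage, Set.ncard_image_of_injective _ Subtype.val_injective,
    Set.ncard_eq_toFinset_card']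
  simpa using (collinearityGraph k S a).even_card_odd_degree_vertices

lemma even_ncard_setOf_isOrdinaryLine (hS : S.Finite) (hodd : Odd S.ncard) (ha : a ∈ S)
    (hline : ∀ b ∈ S, a ≠ b → Even (linePoints k S a b).ncard → IsOrdinaryLine k S a b) :
    Even {b | IsOrdinaryLine k S a b}.ncard := by
  have hordinary : {b | IsOrdinaryLine k S a b} =
      (S \ {a}) \ {x ∈ S \ {a} | Odd (linePoints k S a x).ncard} := by
    ext b
    constructor
    · intro hab
      have htwo := (isOrdinaryLine_iff_ncard_linePoints_eq_two k ha hab.2.1 hab.2.2.1).1 hab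
      exact ⟨⟨hab.2.1, hab.2.2.1.symm⟩, fun h ↦ by simp [htwo, Nat.odd_iff] at h⟩
    · rintro ⟨hb, hnot⟩
      exact hline b hb.1 (fun h ↦ hb.2 h.symm) (by simpa using fun h ↦ hnot ⟨hb, h⟩)
  have hfin : (S \ {a}).Finite := hS.sdiff
  have hsplit := Set.ncard_sdiff_add_ncard_of_subset
    (Set.sep_subset (S \ {a}) fun x ↦ Odd (linePoints k S a x).ncard) hfin
  have hcard := Set.ncard_sdiff_singleton_add_one ha hS
  have heven := even_ncard_setOf_odd_ncard_linePoints k hS ha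
  rw [← hordinary] at hsplit
  grind

end Parity

section SylvesterGallai

section Foot

variable {k E P : Type*} [Field k] [AddCommGroup E] [Module k E] [AddTorsor E P]

/-- The projection of `p` onto the line through `a` and `b` along the kernel of the linear form `φ`,
provided that the line is transversal to that kernel. When `φ (b -ᵥ a) = 0`, it is `a`. -/
def foot (φ : Dual k E) (a b p : P) : P :=
  lineMap a b (φ (p -ᵥ a) / φ (b -ᵥ a))

variable {φ : Dual k E} {a b p q : P}

lemma foot_mem_affineSpan_pair (φ : Dual k E) (a b p : P) : foot φ a b p ∈ line[k, a, b] :=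
  lineMap_mem_affineSpan_pair _ _ _

lemma apply_foot_vsub (hab : φ (b -ᵥ a) ≠ 0) : φ (foot φ a b p -ᵥ p) = 0 := by
  rw [foot, lineMap_apply, vadd_vsub_assoc, map_add, map_smul, smul_eq_mul, div_mul_cancel₀ _ hab,
    ← map_add, vsub_add_vsub_cancel, vsub_self, map_zero]

lemma foot_eq_of_mem_affineSpan_pair (hab : φ (b -ᵥ a) ≠ 0) (hq : q ∈ line[k, a, b])
    (hqp : φ (q -ᵥ p) = 0) : foot φ a b p = q := by
  obtain ⟨t, rfl⟩ := mem_affineSpan_pair_iff_exists_lineMap_eq.1 hq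
  have ht : φ (p -ᵥ a) = t * φ (b -ᵥ a) := by
    rw [← vsub_sub_vsub_cancel_right _ _ a, map_sub, sub_eq_zero, lineMap_vsub_left, map_smul,
      smul_eq_mul] at hqp
    exact hqp.symm
  rw [foot, ht, mul_div_cancel_right₀ _ hab]

lemma foot_lineMap_vsub_lineMap {x : P} (hqp : φ (q -ᵥ p) = 0) (hxp : φ (x -ᵥ p) ≠ 0) (s : k) :
    foot φ p x (lineMap q x s) -ᵥ lineMap q x s = (1 - s) • (p -ᵥ q) := by
  have hsegment : lineMap p x s -ᵥ lineMap q x s = (1 - s) • (p -ᵥ q) := by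
    simp [lineMap_vsub_lineMap, lineMap_apply_module]
  have hvertical : φ (lineMap p x s -ᵥ lineMap q x s) = 0 := by
    rw [hsegment, map_smul, ← neg_vsub_eq_vsub_rev, map_neg, hqp, neg_zero, smul_zero]
  rw [foot_eq_of_mem_affineSpan_pair hxp (lineMap_mem_affineSpan_pair _ _ _) hvertical, hsegment]

lemma exists_dual_forall_mem_apply_ne_zero [Infinite k] {T : Set E} (hT : T.Finite) :
    ∃ φ : Dual k E, ∀ v ∈ T, v ≠ 0 → φ v ≠ 0 := by
  have : Finite ↥(T \ {0}) := hT.sdiff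
  obtain ⟨φ, hφ⟩ := exists_dual_forall_apply_ne_zero (K := k)
    (fun v : ↥(T \ {0}) ↦ (v : E)) fun v ↦ v.2.2
  exact ⟨φ, fun v hv hv_ne ↦ hφ ⟨v, hv, hv_ne⟩⟩

end Foot

variable {k E P : Type*} [Field k] [LinearOrder k] [IsStrictOrderedRing k]
  [AddCommGroup E] [Module k E] [AddTorsor E P]

lemma sbtw_or_sbtw_of_pos_iff_pos {s t : k} (hs : s ≠ 0) (ht : t ≠ 0) (hst : s ≠ t)
    (hpos : 0 < s ↔ 0 < t) : Sbtw k 0 s t ∨ Sbtw k 0 t s := by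
  simp only [Sbtw, ← mem_segment_iff_wbtw, segment_eq_uIcc, Set.mem_uIcc]
  grind

lemma exists_sbtw_of_collinear {T : Set P} {q : P} (hT : 2 < T.ncard) (hq : q ∉ T)
    (hcol : Collinear k (insert q T)) : ∃ x ∈ T, ∃ y ∈ T, Sbtw k q y x := by
  obtain ⟨v, hv⟩ := (collinear_iff_of_mem (Set.mem_insert q T)).1 hcol
  choose! r hr using fun y (hy : y ∈ T) ↦ hv y (Set.mem_insert_of_mem q hy)
  have hr_ne : ∀ y ∈ T, r y ≠ 0 := fun y hy h ↦ by
    have hyq : y = q := by rw [hr y hy, h, zero_smul, zero_vadd]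
    exact hq (hyq ▸ hy)
  obtain ⟨x, hx, y, hy, hxy, hside⟩ := Set.exists_ne_map_eq_of_ncard_lt_of_maps_to
    (t := Set.univ) (f := fun y ↦ 0 < r y) (by simpa [Set.ncard_univ] using hT) (fun _ _ ↦ trivial)
  have hr_xy : r x ≠ r y := fun h ↦ hxy (by rw [hr x hx, hr y hy, h])
  have hinj : Function.Injective (lineMap q (v +ᵥ q) : k →ᵃ[k] P) := by
    refine lineMap_injective k fun h ↦ hxy ?_
    have hv_zero : v = 0 := by simpa using (vsub_eq_zero_iff_eq (p₁ := v +ᵥ q)).2 h.symm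
    rw [hr x hx, hr y hy, hv_zero, smul_zero, smul_zero]
  have hline : ∀ z ∈ T, lineMap q (v +ᵥ q) (r z) = z := fun z hz ↦ by
    rw [lineMap_apply, vadd_vsub, ← hr z hz]
  rcases sbtw_or_sbtw_of_pos_iff_pos (hr_ne x hx) (hr_ne y hy) hr_xy hside.to_iff with h | h
  · rw [← hinj.sbtw_map_iff, lineMap_apply_zero, hline x hx, hline y hy] at h
    exact ⟨y, hy, x, hx, h⟩
  · rw [← hinj.sbtw_map_iff, lineMap_apply_zero, hline x hx, hline y hy] at h
    exact ⟨x, hx, y, hy, h⟩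

variable {S : Set P}

lemma exists_sbtw_foot {φ : Dual k E} {a b p : P}
    (hφ : ∀ x ∈ S, ∀ y ∈ S, x ≠ y → φ (y -ᵥ x) ≠ 0) (ha : a ∈ S) (hb : b ∈ S) (hp : p ∈ S)
    (hne : a ≠ b) (hp_line : p ∉ line[k, a, b]) (hab : ¬ IsOrdinaryLine k S a b) :
    ∃ x ∈ S, ∃ y ∈ S, x ∈ line[k, a, b] ∧ y ∈ line[k, a, b] ∧ Sbtw k (foot φ a b p) y x := by
  obtain ⟨c, hc, hcol, hca, hcb⟩ : ∃ c ∈ S, Collinear k {a, b, c} ∧ c ≠ a ∧ c ≠ b := by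
    simpa [IsOrdinaryLine, ha, hb, hne] using hab
  have hc_line : c ∈ line[k, a, b] := (mem_affineSpan_pair_iff_collinear hne).2 hcol
  have hT : ∀ x ∈ ({c, a, b} : Set P), x ∈ S ∧ x ∈ line[k, a, b] := by
    rintro x (rfl | rfl | rfl)
    exacts [⟨hc, hc_line⟩, ⟨ha, left_mem_affineSpan_pair ..⟩, ⟨hb, right_mem_affineSpan_pair ..⟩]
  have hT_card : ({c, a, b} : Set P).ncard = 3 :=
    Set.ncard_eq_three.2 ⟨c, a, b, hca, hcb, hne, rfl⟩
  have hfoot : foot φ a b p ∉ ({c, a, b} : Set P) := fun h ↦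
    hφ p hp _ (hT _ h).1 (fun hp_eq ↦ hp_line (hp_eq ▸ (hT _ h).2))
      (apply_foot_vsub (hφ a ha b hb hne))
  obtain ⟨x, hx, y, hy, hsbtw⟩ := exists_sbtw_of_collinear (by lia) hfoot
    (collinear_insert_insert_of_mem_affineSpan_pair (foot_mem_affineSpan_pair φ a b p) hc_line)
  exact ⟨x, (hT x hx).1, y, (hT y hy).1, (hT x hx).2, (hT y hy).2, hsbtw⟩

lemma exists_foot_vsub_eq_smul {φ : Dual k E} {a b p : P}
    (hφ : ∀ x ∈ S, ∀ y ∈ S, x ≠ y → φ (y -ᵥ x) ≠ 0) (ha : a ∈ S) (hb : b ∈ S) (hp : p ∈ S)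
    (hne : a ≠ b) (hp_line : p ∉ line[k, a, b]) (hab : ¬ IsOrdinaryLine k S a b) :
    ∃ x ∈ S, ∃ y ∈ S, p ≠ x ∧ y ∉ line[k, p, x] ∧
      ∃ r ∈ Set.Ioo (0 : k) 1, foot φ p x y -ᵥ y = r • (p -ᵥ foot φ a b p) := by
  obtain ⟨x, hx, y, hy, hx_line, hy_line, hsbtw⟩ := exists_sbtw_foot hφ ha hb hp hne hp_line hab
  have hpx : p ≠ x := fun h ↦ hp_line (h ▸ hx_line)
  have hy_notMem : y ∉ line[k, p, x] := fun h ↦ by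
    have hp_mem : p ∈ line[k, x, y] :=
      ((mem_affineSpan_pair_iff_collinear hpx).1 h).mem_affineSpan_of_mem_of_ne
        (by simp) (by simp) (by simp) hsbtw.ne_right.symm
    exact hp_line (affineSpan_pair_le_of_mem_of_mem hx_line hy_line hp_mem)
  obtain ⟨⟨s, ⟨hs_pos, hs_lt⟩, rfl⟩, -⟩ := sbtw_iff_mem_image_Ioo_and_ne.1 hsbtw
  exact ⟨x, hx, _, hy, hpx, hy_notMem, 1 - s, ⟨sub_pos.2 hs_lt, sub_lt_self 1 hs_pos⟩,
    foot_lineMap_vsub_lineMap (apply_foot_vsub (hφ a ha b hb hne)) (hφ p hp x hx hpx) s⟩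

/-- The **Sylvester–Gallai theorem**. -/
theorem exists_isOrdinaryLine (hS : S.Finite) (hline : ¬ Collinear k S) :
    ∃ a b, IsOrdinaryLine k S a b := by
  let T : Set (P × P × P) := {t ∈ S ×ˢ S ×ˢ S | t.1 ≠ t.2.1 ∧ t.2.2 ∉ line[k, t.1, t.2.1]}
  obtain ⟨φ, hφ⟩ := exists_dual_forall_mem_apply_ne_zero (k := k) (hS.image2 (· -ᵥ ·) hS)
  have hT : T.Finite := (hS.prod (hS.prod hS)).sep _
  obtain ⟨ψ, hψ⟩ := exists_dual_forall_mem_apply_ne_zero (k := k)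
    (hT.image fun t ↦ foot φ t.1 t.2.1 t.2.2 -ᵥ t.2.2)
  have hT_nonempty : T.Nonempty := by
    obtain ⟨a, ha, b, hb, p, hp, habp⟩ := exists_not_collinear_triple hline
    have hab : a ≠ b := by
      rintro rfl
      exact habp (by simpa using collinear_pair k a p)
    exact ⟨(a, b, p), ⟨ha, hb, hp⟩, hab, mt (mem_affineSpan_pair_iff_collinear hab).1 habp⟩
  obtain ⟨⟨a, b, p⟩, habp, hmin⟩ := Set.exists_min_image T
    (fun t ↦ |ψ (foot φ t.1 t.2.1 t.2.2 -ᵥ t.2.2)|) hT hT_nonempty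
  have ⟨⟨ha, hb, hp⟩, hne, hp_line⟩ := habp
  refine ⟨a, b, by_contra fun hab ↦ ?_⟩
  obtain ⟨x, hx, y, hy, hpx, hy_line, r, ⟨hr_pos, hr_lt⟩, hfoot⟩ := exists_foot_vsub_eq_smul
    (fun x hx y hy hxy ↦ hφ _ (Set.mem_image2_of_mem hy hx) (vsub_ne_zero.2 hxy.symm))
    ha hb hp hne hp_line hab
  have hpos : 0 < |ψ (foot φ a b p -ᵥ p)| :=
    abs_pos.2 (hψ _ (Set.mem_image_of_mem _ habp)
      (vsub_ne_zero.2 fun h ↦ hp_line (h ▸ foot_mem_affineSpan_pair φ a b p)))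
  refine (hmin (p, x, y) ⟨⟨hp, hx, hy⟩, hpx, hy_line⟩).not_gt ?_
  calc |ψ (foot φ p x y -ᵥ y)| = r * |ψ (foot φ a b p -ᵥ p)| := by
        rw [hfoot, map_smul, smul_eq_mul, abs_mul, abs_of_pos hr_pos, ← neg_vsub_eq_vsub_rev,
          map_neg, abs_neg]
    _ < |ψ (foot φ a b p -ᵥ p)| := mul_lt_of_lt_one_left hpos hr_lt

end SylvesterGallai

theorem odd_three_bounded_has_simple_wedge_general {k E P : Type*} [Field k] [LinearOrder k]
    [IsStrictOrderedRing k] [AddCommGroup E] [Module k E] [AddTorsor E P] {S : Set P}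
    (hS : S.Finite) (hline : ¬ Collinear k S) (hodd : Odd S.ncard)
    (hordinary : ∀ a ∈ S, ∀ b ∈ S, a ≠ b →
      Even (linePoints k S a b).ncard → IsOrdinaryLine k S a b) :
    ∃ a ∈ S, ∃ b ∈ S, ∃ c ∈ S, a ≠ b ∧ a ≠ c ∧ b ≠ c ∧
      IsOrdinaryLine k S a b ∧ IsOrdinaryLine k S a c := by
  obtain ⟨a, b, hab⟩ := exists_isOrdinaryLine hS hline
  have heven := even_ncard_setOf_isOrdinaryLine k hS hodd hab.1 (hordinary a hab.1)
  have hpos : 0 < {c | IsOrdinaryLine k S a c}.ncard :=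
    (Set.ncard_pos (hS.subset fun c hc ↦ hc.2.1)).2 ⟨b, hab⟩
  have hone_lt : 1 < {c | IsOrdinaryLine k S a c}.ncard := by grind
  obtain ⟨c, hac, hcb⟩ := Set.exists_ne_of_one_lt_ncard hone_lt b
  exact ⟨a, hab.1, b, hab.2.1, c, hac.2.1, hab.2.2.1, hac.2.2.1, hcb.symm, hab, hac⟩

/-- A finite non-collinear `3`-bounded set of points of odd
cardinality in the plane spans a simple wedge. -/
theorem odd_three_bounded_has_simple_wedge (V : Set (ℝ × ℝ)) (hfin : V.Finite)
    (hline : ¬ Collinear ℝ V) (hodd : Odd V.ncard) (hbd : ThreeBounded V) :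
    ∃ a ∈ V, ∃ b ∈ V, ∃ c ∈ V, a ≠ b ∧ a ≠ c ∧ b ≠ c ∧
      SimpleLine V a b ∧ SimpleLine V a c :=
  odd_three_bounded_has_simple_wedge_general hfin hline hodd fun a ha b hb hab heven ↦
    isOrdinaryLine_of_even_ncard_linePoints ℝ hfin ha hb hab heven (hbd a ha b hb hab)
end

section
/- Let V be a finite set of points in the real plane ℝ², not all contained in a single line, such that |V| is an odd number and V is 3-bounded. Then a simple wedge can be created from every simple line of V: for every pair of distinct points a, b ∈ V such that L_{a,b} is a simple line of V, there exists a point c ∈ V \ {a,b} such that either L_{a,c} or L_{b,c} is a simple line of V. -/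
/-!
Join two points of `V \ {a}` by an edge when they lie on a common line through `a`. A point `c`
whose line through `a` contains `n` points of `V` has degree `n - 2`; for a `3`-bounded set this
is `0` or `1`, and it is `0` exactly when the line is simple. As `V \ {a}` has an even number of
points, the handshaking lemma gives evenly many points of even degree, so `b` is not the only one.
-/

theorem exists_ne_even_degree_of_even_card {α : Type*} [Fintype α] (G : SimpleGraph α)
    [DecidableRel G.Adj] (hα : Even (Fintype.card α)) {v : α} (hv : Even (G.degree v)) :
    ∃ w, w ≠ v ∧ Even (G.degree w) := by
  classical
  -- On an even number of vertices, complementing the graph flips the parity of every degree.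
  have odd_compl_iff (w : α) : Odd (Gᶜ.degree w) ↔ Even (G.degree w) := by
    have hlt := G.degree_lt_card_verts w
    rw [G.degree_compl]
    grind
  obtain ⟨w, hwv, hw⟩ :=
    Gᶜ.exists_ne_odd_degree_of_exists_odd_degree v ((odd_compl_iff v).2 hv)
  exact ⟨w, hwv, (odd_compl_iff w).1 hw⟩

variable {k E P : Type*} [DivisionRing k] [AddCommGroup E] [Module k E] [AddTorsor E P]

variable (k) in
/-- The points of `V` on the line through `a` and `b`. Collinearity encodes incidence with that
line only when `a ≠ b`; for `a = b` this is all of `V`. -/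
def pointsOnLine (V : Set P) (a b : P) : Set P :=
  {c ∈ V | Collinear k {a, b, c}}

variable (k) in
/-- The collinearity graph of the pencil of lines through `a`: distinct points of `V \ {a}` are
adjacent when they lie on a common line through `a`. It turns the number of points on such a line
into a vertex degree. -/
def pencilGraph (V : Set P) (a : P) : SimpleGraph ↥(V \ {a}) where
  Adj c d := c ≠ d ∧ Collinear k {a, (c : P), (d : P)}
  symm := ⟨fun c d h ↦ ⟨h.1.symm, by rw [Set.pair_comm]; exact h.2⟩⟩
  loopless := ⟨fun _ h ↦ h.1 rfl⟩

theorem pair_subset_pointsOnLine {V : Set P} {a b : P} (ha : a ∈ V) (hb : b ∈ V) :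
    {a, b} ⊆ pointsOnLine k V a b := by
  rintro x (rfl | rfl)
  · exact ⟨ha, by simpa [Set.insert_comm] using collinear_pair k b x⟩
  · exact ⟨hb, by simpa using collinear_pair k a x⟩

theorem pointsOnLine_eq_insert_insert_neighborSet {V : Set P} {a : P} (ha : a ∈ V)
    (c : ↥(V \ {a})) :
    pointsOnLine k V a c =
      insert a (insert (c : P) ((↑) '' (pencilGraph k V a).neighborSet c)) := by
  ext x
  constructor
  · rintro ⟨hx, hcol⟩
    by_cases hxa : x = a
    · exact .inl hxa
    by_cases hxc : x = c
    · exact .inr (.inl hxc)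
    exact .inr (.inr ⟨⟨x, hx, hxa⟩, ⟨fun h ↦ hxc (congrArg Subtype.val h).symm, hcol⟩, rfl⟩)
  · rintro (hx | hx | ⟨d, hd, rfl⟩)
    · exact pair_subset_pointsOnLine ha c.2.1 (.inl hx)
    · exact pair_subset_pointsOnLine ha c.2.1 (.inr hx)
    · exact ⟨d.2.1, hd.2⟩

theorem ncard_pointsOnLine {V : Set P} {a : P} (ha : a ∈ V) (c : ↥(V \ {a}))
    [Fintype ((pencilGraph k V a).neighborSet c)] :
    (pointsOnLine k V a c).ncard = (pencilGraph k V a).degree c + 2 := by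
  have hc_notMem : (c : P) ∉ ((↑) '' (pencilGraph k V a).neighborSet c : Set P) := by
    simp
  have ha_notMem : a ∉ insert (c : P) ((↑) '' (pencilGraph k V a).neighborSet c) := by
    rintro (h | ⟨d, -, h⟩)
    · exact c.2.2 h.symm
    · exact d.2.2 h
  rw [pointsOnLine_eq_insert_insert_neighborSet ha, Set.ncard_insert_of_notMem ha_notMem,
    Set.ncard_insert_of_notMem hc_notMem, Set.ncard_image_of_injective _ Subtype.val_injective,
    ← Nat.card_coe_set_eq, Nat.card_eq_fintype_card, SimpleGraph.card_neighborSet_eq_degree]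

theorem exists_ne_even_ncard_pointsOnLine {V : Set P} (hodd : Odd V.ncard) {a b : P}
    (ha : a ∈ V) (hb : b ∈ V) (hba : b ≠ a) (heven : Even (pointsOnLine k V a b).ncard) :
    ∃ c ∈ V, c ≠ a ∧ c ≠ b ∧ Even (pointsOnLine k V a c).ncard := by
  classical
  have hfin : V.Finite := Set.finite_of_ncard_pos hodd.pos
  have : Fintype ↥(V \ {a}) := hfin.sdiff.fintype
  have hcard : Even (Fintype.card ↥(V \ {a})) := by
    rw [← Nat.card_eq_fintype_card, Nat.card_coe_set_eq, Set.ncard_sdiff_singleton_of_mem ha]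
    exact hodd.tsub_odd odd_one
  have even_ncard_iff (c : ↥(V \ {a})) :
      Even (pointsOnLine k V a c).ncard ↔ Even ((pencilGraph k V a).degree c) := by
    rw [ncard_pointsOnLine ha, Nat.even_add]
    simp
  obtain ⟨c, hcb, hc⟩ := exists_ne_even_degree_of_even_card (pencilGraph k V a) hcard
    ((even_ncard_iff ⟨b, hb, hba⟩).1 heven)
  exact ⟨c, c.2.1, c.2.2, fun h ↦ hcb (Subtype.ext h), (even_ncard_iff c).2 hc⟩

theorem pointsOnLine_eq_pair_of_even_of_le_three {V : Set P} {a b : P} (ha : a ∈ V) (hb : b ∈ V)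
    (hab : a ≠ b) (hfin : V.Finite) (heven : Even (pointsOnLine k V a b).ncard)
    (hle : (pointsOnLine k V a b).ncard ≤ 3) : pointsOnLine k V a b = {a, b} := by
  refine (Set.eq_of_subset_of_ncard_le (pair_subset_pointsOnLine ha hb) ?_
    (hfin.subset (Set.sep_subset _ _))).symm
  rw [Set.ncard_pair hab]
  grind

theorem simpleLine_iff_pointsOnLine_eq_pair {V : Set (ℝ × ℝ)} {a b : ℝ × ℝ} :
    SimpleLine V a b ↔ a ∈ V ∧ b ∈ V ∧ a ≠ b ∧ pointsOnLine ℝ V a b = {a, b} := by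
  refine and_congr_right fun ha ↦ and_congr_right fun hb ↦ and_congr_right fun _ ↦ ?_
  exact ⟨fun h ↦ Set.Subset.antisymm (fun c hc ↦ h c hc.1 hc.2) (pair_subset_pointsOnLine ha hb),
    fun h c hc hcol ↦ h.subset ⟨hc, hcol⟩⟩

theorem simple_wedge_from_every_simple_line_general {V : Set P} (hodd : Odd V.ncard) {a b : P}
    (ha : a ∈ V) (hbd : ∀ c ∈ V, a ≠ c → (pointsOnLine k V a c).ncard ≤ 3) (hb : b ∈ V)
    (hab : a ≠ b) (hline : pointsOnLine k V a b = {a, b}) :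
    ∃ c ∈ V, c ≠ a ∧ c ≠ b ∧ pointsOnLine k V a c = {a, c} := by
  have heven : Even (pointsOnLine k V a b).ncard := by
    rw [hline, Set.ncard_pair hab]
    exact even_two
  obtain ⟨c, hc, hca, hcb, hceven⟩ := exists_ne_even_ncard_pointsOnLine hodd ha hb hab.symm heven
  exact ⟨c, hc, hca, hcb, pointsOnLine_eq_pair_of_even_of_le_three ha hc hca.symm
    (Set.finite_of_ncard_pos hodd.pos) hceven (hbd c hc hca.symm)⟩

/-- In a finite non-collinear `3`-bounded set of odd size, a
simple wedge can be created from every simple line. -/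
theorem simple_wedge_from_every_simple_line (V : Set (ℝ × ℝ)) (hfin : V.Finite)
    (hline : ¬ Collinear ℝ V) (hodd : Odd V.ncard) (hbd : ThreeBounded V)
    (a b : ℝ × ℝ) (hab : SimpleLine V a b) :
    ∃ c ∈ V, c ≠ a ∧ c ≠ b ∧ (SimpleLine V a c ∨ SimpleLine V b c) := by
  obtain ⟨ha, hb, hne, hpair⟩ := simpleLine_iff_pointsOnLine_eq_pair.1 hab
  obtain ⟨c, hc, hca, hcb, hac⟩ :=
    simple_wedge_from_every_simple_line_general hodd ha (hbd a ha) hb hne hpair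
  exact ⟨c, hc, hca, hcb, .inl (simpleLine_iff_pointsOnLine_eq_pair.2 ⟨ha, hc, hca.symm, hac⟩)⟩
end

section
/- Let V = {(-2,0), (2,0), (-1,2), (1,2), (0,4), (0,4/3)} ⊆ ℝ². Then V is a set of 6 points, not all contained in a single line, V is 3-bounded, and V contains no simple wedge: there do not exist three distinct points a, b, c ∈ V such that L_{a,b} and L_{a,c} are both simple lines of V. -/
/-!
The six points are the vertices of a complete quadrilateral: four lines, pairwise meeting, no three
concurrent. Two vertices on a common line of the quadrilateral are collinear with the third vertex
on that line, so simple lines join only opposite vertices, and each vertex has a single opposite.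
Two vertices on a common line are collinear only with vertices of that line, and there are three of
these; a line joining opposite vertices carries no further vertex.

The four lines are the tangents of slope `±2` and `±2/3` to the parabola `x² = 3 (1 - y)`. Any
distinct non-vertical tangents to a parabola are in general position.
-/

section GeneralPosition

variable {ι k V P : Type*} [DivisionRing k] [AddCommGroup V] [Module k V] [AddTorsor V P]
  {ℓ : ι → AffineSubspace k P} {i j : ι} {a b c x y : P}

lemma mem_of_collinear_of_mem_of_mem {s : AffineSubspace k P} (h : Collinear k {a, b, c})
    (hab : a ≠ b) (ha : a ∈ s) (hb : b ∈ s) : c ∈ s :=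
  affineSpan_pair_le_of_mem_of_mem ha hb <|
    h.mem_affineSpan_of_mem_of_ne (by simp) (by simp) (by simp) hab

/-- A family of lines in general position: any two meet in exactly one point, no three are
concurrent. A line is encoded as an affine subspace whose points are collinear, which allows
degenerate cases when the family has at most two members. -/
structure LinesInGeneralPosition (ℓ : ι → AffineSubspace k P) : Prop where
  collinear : ∀ i, Collinear k (ℓ i : Set P)
  existsUnique_meet : ∀ {i j}, i ≠ j → ∃! x, x ∈ ℓ i ∧ x ∈ ℓ j
  not_concurrent : ∀ {i j m x}, i ≠ j → i ≠ m → j ≠ m → x ∈ ℓ i → x ∈ ℓ j → x ∉ ℓ m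

/-- The vertices of a family of lines: the points lying on at least two of them. -/
def lineVertices (ℓ : ι → AffineSubspace k P) : Set P :=
  {x | ∃ i j, i ≠ j ∧ x ∈ ℓ i ∧ x ∈ ℓ j}

lemma one_lt_ncard_lines_of_mem_lineVertices [Finite ι] (hx : x ∈ lineVertices ℓ) :
    1 < {i | x ∈ ℓ i}.ncard := by
  obtain ⟨i, j, hij, hi, hj⟩ := hx
  exact (Set.one_lt_ncard).2 ⟨i, hi, j, hj, hij⟩

lemma mem_or_mem_of_no_common_line [Finite ι] (hι : Nat.card ι ≤ 4)
    (hx : x ∈ lineVertices ℓ) (hy : y ∈ lineVertices ℓ) (hxy : ∀ i, x ∈ ℓ i → y ∉ ℓ i) (m : ι) :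
    x ∈ ℓ m ∨ y ∈ ℓ m := by
  have hdisj : Disjoint {i | x ∈ ℓ i} {i | y ∈ ℓ i} := Set.disjoint_left.2 hxy
  have hcover : {i | x ∈ ℓ i} ∪ {i | y ∈ ℓ i} = Set.univ := by
    refine Set.eq_of_subset_of_ncard_le (Set.subset_univ _) ?_
    have hx₂ := one_lt_ncard_lines_of_mem_lineVertices hx
    have hy₂ := one_lt_ncard_lines_of_mem_lineVertices hy
    rw [Set.ncard_univ, Set.ncard_union_eq hdisj]
    lia
  exact hcover.symm.subset (Set.mem_univ m)

namespace LinesInGeneralPosition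

lemma eq_of_mem_of_mem (hℓ : LinesInGeneralPosition ℓ) (hij : i ≠ j) (hxi : x ∈ ℓ i)
    (hxj : x ∈ ℓ j) (hyi : y ∈ ℓ i) (hyj : y ∈ ℓ j) : x = y :=
  (hℓ.existsUnique_meet hij).unique ⟨hxi, hxj⟩ ⟨hyi, hyj⟩

lemma finite_lineVertices [Finite ι] (hℓ : LinesInGeneralPosition ℓ) :
    (lineVertices ℓ).Finite := by
  have hcover : lineVertices ℓ ⊆
      ⋃ e : {e : ι × ι // e.1 ≠ e.2}, {x | x ∈ ℓ e.1.1 ∧ x ∈ ℓ e.1.2} :=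
    fun x ⟨i, j, hij, hx⟩ ↦ Set.mem_iUnion.2 ⟨⟨(i, j), hij⟩, hx⟩
  refine (Set.finite_iUnion fun e ↦ Set.Subsingleton.finite ?_).subset hcover
  exact fun x hx y hy ↦ hℓ.eq_of_mem_of_mem e.2 hx.1 hx.2 hy.1 hy.2

lemma ncard_lineVertices (hℓ : LinesInGeneralPosition ℓ) :
    (lineVertices ℓ).ncard = (Nat.card ι).choose 2 := by
  have hmeet : ∀ e ∈ (Sym2.diagSetᶜ : Set (Sym2 ι)), ∃ x, ∀ i ∈ e, x ∈ ℓ i := by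
    refine Sym2.ind fun i j hij ↦ ?_
    obtain ⟨x, hx, -⟩ := hℓ.existsUnique_meet (i := i) (j := j) (by simpa using hij)
    exact ⟨x, by simpa using hx⟩
  choose! f hf using hmeet
  have hinj : Set.InjOn f Sym2.diagSetᶜ := by
    intro e he e' he' hee'
    induction e with | _ i j
    have hij : i ≠ j := by simpa using he
    have hsub : ∀ m ∈ e', m = i ∨ m = j := by
      intro m hm
      by_contra! hne
      exact hℓ.not_concurrent hij hne.1.symm hne.2.symm (hf _ he i (by simp))
        (hf _ he j (by simp)) (hee' ▸ hf _ he' m hm)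
    induction e' with | _ i' j'
    have hij' : i' ≠ j' := by simpa using he'
    have hi' := hsub i' (by simp)
    have hj' := hsub j' (by simp)
    grind
  have himage : lineVertices ℓ = f '' Sym2.diagSetᶜ := by
    ext x
    constructor
    · rintro ⟨i, j, hij, hi, hj⟩
      have he : s(i, j) ∈ (Sym2.diagSetᶜ : Set (Sym2 ι)) := by simpa using hij
      exact ⟨s(i, j), he, hℓ.eq_of_mem_of_mem hij (hf _ he i (by simp)) (hf _ he j (by simp)) hi hj⟩
    · rintro ⟨e, he, rfl⟩
      induction e with | _ i j
      exact ⟨i, j, by simpa using he, hf _ he i (by simp), hf _ he j (by simp)⟩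
  rw [himage, hinj.ncard_image, Sym2.ncard_diagSet_compl]

lemma ncard_lineVertices_inter [Finite ι] (hℓ : LinesInGeneralPosition ℓ) (i : ι) :
    (lineVertices ℓ ∩ ℓ i).ncard = Nat.card ι - 1 := by
  have hmeet : ∀ j ∈ ({i}ᶜ : Set ι), ∃ x, x ∈ ℓ i ∧ x ∈ ℓ j :=
    fun j hj ↦ (hℓ.existsUnique_meet (Ne.symm hj)).exists
  choose! f hfi hfj using hmeet
  have hinj : Set.InjOn f {i}ᶜ := by
    intro j hj j' hj' hjj'
    by_contra hne
    exact hℓ.not_concurrent (Ne.symm hj) (Ne.symm hj') hne (hfi j hj) (hfj j hj)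
      (hjj' ▸ hfj j' hj')
  have himage : lineVertices ℓ ∩ ℓ i = f '' {i}ᶜ := by
    ext x
    constructor
    · rintro ⟨⟨j, m, hjm, hj, hm⟩, hi⟩
      obtain ⟨n, hn, hxn⟩ : ∃ n, n ≠ i ∧ x ∈ ℓ n := by
        by_cases hji : j = i
        · exact ⟨m, hji ▸ hjm.symm, hm⟩
        · exact ⟨j, hji, hj⟩
      exact ⟨n, hn, hℓ.eq_of_mem_of_mem hn.symm (hfi n hn) (hfj n hn) hi hxn⟩
    · rintro ⟨j, hj, rfl⟩
      exact ⟨⟨i, j, Ne.symm hj, hfi j hj, hfj j hj⟩, hfi j hj⟩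
  rw [himage, hinj.ncard_image, Set.ncard_compl, Set.ncard_singleton]

lemma not_collinear_lineVertices (hℓ : LinesInGeneralPosition ℓ) (hι : 3 ≤ Nat.card ι) :
    ¬ Collinear k (lineVertices ℓ) := by
  intro h
  have : Finite ι := Nat.finite_of_card_ne_zero (by lia)
  obtain ⟨i, -, j, -, m, -, hij, him, hjm⟩ :=
    (Set.two_lt_ncard (s := (Set.univ : Set ι))).1 (by rw [Set.ncard_univ]; lia)
  obtain ⟨a, hai, haj⟩ := (hℓ.existsUnique_meet hij).exists
  obtain ⟨b, hbi, hbm⟩ := (hℓ.existsUnique_meet him).exists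
  obtain ⟨c, hcj, hcm⟩ := (hℓ.existsUnique_meet hjm).exists
  have hab : a ≠ b := by
    rintro rfl
    exact hℓ.not_concurrent hij him hjm hai haj hbm
  have habc : Collinear k {a, b, c} := by
    refine h.subset ?_
    rintro x (rfl | rfl | rfl)
    exacts [⟨i, j, hij, hai, haj⟩, ⟨i, m, him, hbi, hbm⟩, ⟨j, m, hjm, hcj, hcm⟩]
  exact hℓ.not_concurrent hij him hjm (mem_of_collinear_of_mem_of_mem habc hab hai hbi) hcj hcm

lemma exists_mem_lineVertices_ne_ne (hℓ : LinesInGeneralPosition ℓ) (hι : 4 ≤ Nat.card ι)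
    (i : ι) (a b : P) : ∃ c ∈ lineVertices ℓ, c ∈ ℓ i ∧ c ≠ a ∧ c ≠ b := by
  have : Finite ι := Nat.finite_of_card_ne_zero (by lia)
  have hlt : ({a, b} : Set P).ncard < (lineVertices ℓ ∩ ℓ i).ncard := by
    have hpair := Set.ncard_insert_le a {b}
    rw [Set.ncard_singleton] at hpair
    rw [hℓ.ncard_lineVertices_inter]
    lia
  obtain ⟨c, ⟨hc, hci⟩, hcab⟩ := Set.exists_mem_notMem_of_ncard_lt_ncard hlt
  simp only [Set.mem_insert_iff, Set.mem_singleton_iff, not_or] at hcab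
  exact ⟨c, hc, hci, hcab⟩

lemma eq_of_no_common_line [Finite ι] (hℓ : LinesInGeneralPosition ℓ) (hι : Nat.card ι ≤ 4)
    (ha : a ∈ lineVertices ℓ) (hb : b ∈ lineVertices ℓ) (hc : c ∈ lineVertices ℓ)
    (hab : ∀ i, a ∈ ℓ i → b ∉ ℓ i) (hac : ∀ i, a ∈ ℓ i → c ∉ ℓ i) : b = c := by
  obtain ⟨i, j, hij, hbi, hbj⟩ := hb
  have hmem : ∀ m, b ∈ ℓ m → c ∈ ℓ m := fun m hbm ↦
    (mem_or_mem_of_no_common_line hι ha hc hac m).resolve_left fun ham ↦ hab m ham hbm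
  exact hℓ.eq_of_mem_of_mem hij hbi hbj (hmem i hbi) (hmem j hbj)

end LinesInGeneralPosition

lemma eq_or_eq_of_collinear_of_no_common_line [Finite ι] (hι : Nat.card ι ≤ 4)
    (ha : a ∈ lineVertices ℓ) (hb : b ∈ lineVertices ℓ) (hc : c ∈ lineVertices ℓ)
    (hab : ∀ i, a ∈ ℓ i → b ∉ ℓ i) (habc : Collinear k {a, b, c}) : c = a ∨ c = b := by
  by_contra! hne
  obtain ⟨m, -, -, hcm, -⟩ := hc
  rcases mem_or_mem_of_no_common_line hι ha hb hab m with ham | hbm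
  · refine hab m ham (mem_of_collinear_of_mem_of_mem ?_ hne.1.symm ham hcm)
    rwa [Set.pair_comm c b]
  · refine hab m (mem_of_collinear_of_mem_of_mem ?_ hne.2.symm hbm hcm) hbm
    rwa [Set.pair_comm c a, Set.insert_comm]

end GeneralPosition

section CompleteQuadrilateral

variable {ι : Type*} {ℓ : ι → AffineSubspace ℝ (ℝ × ℝ)} {a b : ℝ × ℝ}

lemma SimpleLine.notMem_of_mem (hℓ : LinesInGeneralPosition ℓ) (hι : 4 ≤ Nat.card ι)
    (hab : SimpleLine (lineVertices ℓ) a b) (i : ι) (hai : a ∈ ℓ i) : b ∉ ℓ i := by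
  intro hbi
  obtain ⟨c, hc, hci, hca, hcb⟩ := hℓ.exists_mem_lineVertices_ne_ne hι i a b
  have habc : Collinear ℝ {a, b, c} := (hℓ.collinear i).subset <| by
    rintro x (rfl | rfl | rfl) <;> assumption
  exact (hab.2.2.2 c hc habc).elim hca hcb

namespace LinesInGeneralPosition

lemma threeBounded_lineVertices [Finite ι] (hℓ : LinesInGeneralPosition ℓ)
    (hι : Nat.card ι ≤ 4) : ThreeBounded (lineVertices ℓ) := by
  intro a ha b hb hab
  by_cases hcommon : ∃ i, a ∈ ℓ i ∧ b ∈ ℓ i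
  · obtain ⟨i, hai, hbi⟩ := hcommon
    have hsub : {c ∈ lineVertices ℓ | Collinear ℝ {a, b, c}} ⊆ lineVertices ℓ ∩ ℓ i :=
      fun c ⟨hc, habc⟩ ↦ ⟨hc, mem_of_collinear_of_mem_of_mem habc hab hai hbi⟩
    calc _ ≤ (lineVertices ℓ ∩ ℓ i).ncard :=
          Set.ncard_le_ncard hsub (hℓ.finite_lineVertices.inter_of_left _)
      _ = Nat.card ι - 1 := hℓ.ncard_lineVertices_inter i
      _ ≤ 3 := by lia
  · push Not at hcommon
    have hsub : {c ∈ lineVertices ℓ | Collinear ℝ {a, b, c}} ⊆ {a, b} :=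
      fun c ⟨hc, habc⟩ ↦ eq_or_eq_of_collinear_of_no_common_line hι ha hb hc hcommon habc
    calc _ ≤ ({a, b} : Set (ℝ × ℝ)).ncard := Set.ncard_le_ncard hsub
      _ = 2 := Set.ncard_pair hab
      _ ≤ 3 := by simp

lemma not_exists_simple_wedge (hℓ : LinesInGeneralPosition ℓ) (hι : Nat.card ι = 4) :
    ¬ ∃ a ∈ lineVertices ℓ, ∃ b ∈ lineVertices ℓ, ∃ c ∈ lineVertices ℓ, a ≠ b ∧ a ≠ c ∧ b ≠ c ∧
      SimpleLine (lineVertices ℓ) a b ∧ SimpleLine (lineVertices ℓ) a c := by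
  rintro ⟨a, ha, b, hb, c, hc, -, -, hbc, hab, hac⟩
  have : Finite ι := Nat.finite_of_card_ne_zero (by lia)
  exact hbc <| hℓ.eq_of_no_common_line hι.le ha hb hc
    (hab.notMem_of_mem hℓ hι.ge) (hac.notMem_of_mem hℓ hι.ge)

end LinesInGeneralPosition

end CompleteQuadrilateral

section ParabolaTangent

variable {ι k : Type*} [Field k] {α β m n : k} {p : k × k}

/-- The line of slope `m` tangent to the parabola `x² = 4α (β - y)`. It touches the parabola at
`x = -2αm`. -/
def parabolaTangent (α β m : k) : AffineSubspace k (k × k) where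
  carrier := {p | p.2 = m * p.1 + α * m ^ 2 + β}
  smul_vsub_vadd_mem' t p q r hp hq hr := by
    simp only [Set.mem_ofPred_eq, vsub_eq_sub, vadd_eq_add, Prod.fst_add, Prod.snd_add,
      Prod.smul_fst, Prod.smul_snd, Prod.fst_sub, Prod.snd_sub, smul_eq_mul] at hp hq hr ⊢
    rw [hp, hq, hr]
    ring

lemma mem_parabolaTangent : p ∈ parabolaTangent α β m ↔ p.2 = m * p.1 + α * m ^ 2 + β :=
  Iff.rfl

lemma collinear_parabolaTangent : Collinear k (parabolaTangent α β m : Set (k × k)) := by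
  refine (collinear_iff_exists_forall_eq_smul_vadd _).2
    ⟨(0, α * m ^ 2 + β), (1, m), fun p hp ↦ ⟨p.1, Prod.ext (by simp) ?_⟩⟩
  rw [mem_parabolaTangent.1 hp]
  simp only [vadd_eq_add, Prod.snd_add, Prod.smul_snd, smul_eq_mul]
  ring

lemma mem_parabolaTangent_and_mem_iff (hmn : m ≠ n) :
    p ∈ parabolaTangent α β m ∧ p ∈ parabolaTangent α β n ↔
      p = (-α * (m + n), β - α * m * n) := by
  simp only [mem_parabolaTangent, Prod.ext_iff]
  constructor
  · rintro ⟨hm, hn⟩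
    have hx : p.1 = -α * (m + n) :=
      mul_left_cancel₀ (sub_ne_zero.2 hmn) (by linear_combination hn - hm)
    exact ⟨hx, by linear_combination hm + m * hx⟩
  · rintro ⟨hx, hy⟩
    constructor <;> rw [hx, hy] <;> ring

variable {μ : ι → k}

lemma linesInGeneralPosition_parabolaTangent (hα : α ≠ 0) (hμ : μ.Injective) :
    LinesInGeneralPosition fun i ↦ parabolaTangent α β (μ i) where
  collinear _ := collinear_parabolaTangent
  existsUnique_meet hij := by
    simp only [mem_parabolaTangent_and_mem_iff (hμ.ne hij), existsUnique_eq]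
  not_concurrent {i j l x} hij hil hjl hi hj hl := by
    have hxj := (mem_parabolaTangent_and_mem_iff (hμ.ne hij)).1 ⟨hi, hj⟩
    have hxl := (mem_parabolaTangent_and_mem_iff (hμ.ne hil)).1 ⟨hi, hl⟩
    have hfst : -α * (μ i + μ j) = -α * (μ i + μ l) := congrArg Prod.fst (hxj.symm.trans hxl)
    exact hμ.ne hjl (add_left_cancel (mul_left_cancel₀ (neg_ne_zero.2 hα) hfst))

lemma lineVertices_parabolaTangent (hμ : μ.Injective) :
    lineVertices (fun i ↦ parabolaTangent α β (μ i)) =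
      {p | ∃ i j, i ≠ j ∧ p = (-α * (μ i + μ j), β - α * μ i * μ j)} := by
  ext p
  refine exists₂_congr fun i j ↦ and_congr_right fun hij ↦ ?_
  exact mem_parabolaTangent_and_mem_iff (hμ.ne hij)

end ParabolaTangent

section SixPoints

/-- The slopes of the four lines that carry the six points in threes. -/
noncomputable def sixPointSlope : Fin 4 → ℝ := ![2, -2, 2 / 3, -2 / 3]

lemma sixPointSlope_injective : sixPointSlope.Injective := by
  intro i j h
  fin_cases i <;> fin_cases j <;> norm_num [sixPointSlope] at *

lemma sixPoints_eq_lineVertices :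
    ({(-2, 0), (2, 0), (-1, 2), (1, 2), (0, 4), (0, 4/3)} : Set (ℝ × ℝ)) =
      lineVertices fun i ↦ parabolaTangent (3 / 4) 1 (sixPointSlope i) := by
  rw [lineVertices_parabolaTangent sixPointSlope_injective]
  have slope0 : sixPointSlope 0 = 2 := rfl
  have slope1 : sixPointSlope 1 = -2 := rfl
  have slope2 : sixPointSlope 2 = 2 / 3 := rfl
  have slope3 : sixPointSlope 3 = -2 / 3 := rfl
  refine Set.Subset.antisymm ?_ ?_
  · rintro p (rfl | rfl | rfl | rfl | rfl | rfl)
    exacts [⟨0, 2, by decide, by norm_num [slope0, slope2]⟩,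
      ⟨1, 3, by decide, by norm_num [slope1, slope3]⟩,
      ⟨0, 3, by decide, by norm_num [slope0, slope3]⟩,
      ⟨1, 2, by decide, by norm_num [slope1, slope2]⟩,
      ⟨0, 1, by decide, by norm_num [slope0, slope1]⟩,
      ⟨2, 3, by decide, by norm_num [slope2, slope3]⟩]
  · rintro p ⟨i, j, hij, rfl⟩
    fin_cases i <;> fin_cases j <;>
      first | exact absurd rfl hij | norm_num [sixPointSlope]

end SixPoints

theorem six_points_no_simple_wedge_general {ι : Type*} {ℓ : ι → AffineSubspace ℝ (ℝ × ℝ)}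
    (hι : Nat.card ι = 4) (hℓ : LinesInGeneralPosition ℓ) :
    (lineVertices ℓ).ncard = 6 ∧ ¬ Collinear ℝ (lineVertices ℓ) ∧ ThreeBounded (lineVertices ℓ) ∧
      ¬ ∃ a ∈ lineVertices ℓ, ∃ b ∈ lineVertices ℓ, ∃ c ∈ lineVertices ℓ, a ≠ b ∧ a ≠ c ∧ b ≠ c ∧
          SimpleLine (lineVertices ℓ) a b ∧ SimpleLine (lineVertices ℓ) a c := by
  have : Finite ι := Nat.finite_of_card_ne_zero (by lia)
  refine ⟨?_, hℓ.not_collinear_lineVertices (by lia), hℓ.threeBounded_lineVertices hι.le,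
    hℓ.not_exists_simple_wedge hι⟩
  rw [hℓ.ncard_lineVertices, hι]
  rfl

/-- The explicit `3`-bounded set of `6` non-collinear points
`{(-2,0), (2,0), (-1,2), (1,2), (0,4), (0,4/3)}` contains no simple wedge. -/
theorem six_points_no_simple_wedge :
    let V : Set (ℝ × ℝ) := {(-2, 0), (2, 0), (-1, 2), (1, 2), (0, 4), (0, 4/3)}
    V.ncard = 6 ∧ ¬ Collinear ℝ V ∧ ThreeBounded V ∧
      ¬ ∃ a ∈ V, ∃ b ∈ V, ∃ c ∈ V, a ≠ b ∧ a ≠ c ∧ b ≠ c ∧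
          SimpleLine V a b ∧ SimpleLine V a c := by
  rw [sixPoints_eq_lineVertices]
  exact six_points_no_simple_wedge_general (Nat.card_fin 4)
    (linesInGeneralPosition_parabolaTangent (by norm_num) sixPointSlope_injective)
end

section
/- Let V = {(-2,0), (2,0), (-1,2), (1,2), (0,4), (0,4/3)} ⊆ ℝ². Then the simple lines of V are exactly the three lines L_{(-2,0),(2,0)}, L_{(-1,2),(1,2)}, and L_{(0,4),(0,4/3)}: a pair of distinct points of V spans a simple line of V if and only if the pair is one of these three pairs. -/
/-!
The six points are the vertices of a complete quadrilateral whose sides are two sides of the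
triangle `(-2,0), (2,0), (0,4)` and the medians from `(-2,0)` and `(2,0)`, and the three pairs are
its diagonals. Two vertices that are not opposite lie on a side, which contains a third vertex. A
line through two opposite vertices and a third one contains two vertices of some side, hence the
whole side; repeating this, it contains all six vertices, which is impossible.
-/

theorem linearIndependent_pair_prod_iff {R : Type*} [CommRing R] [IsDomain R] {u v : R × R} :
    LinearIndependent R ![u, v] ↔ u.1 * v.2 - u.2 * v.1 ≠ 0 := by
  rw [LinearIndependent.pair_iff]
  simp only [Prod.ext_iff, Prod.fst_add, Prod.snd_add, Prod.smul_fst, Prod.smul_snd, Prod.fst_zero,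
    Prod.snd_zero, smul_eq_mul]
  constructor
  · intro h hdet
    obtain ⟨hv₂, hu₂⟩ := h v.2 (-u.2) ⟨by linear_combination hdet, by ring⟩
    obtain ⟨hv₁, hu₁⟩ := h v.1 (-u.1) ⟨by ring, by linear_combination -hdet⟩
    rw [neg_eq_zero] at hu₁ hu₂
    exact one_ne_zero (h 1 1 ⟨by simp [hu₁, hv₁], by simp [hu₂, hv₂]⟩).1
  · rintro hdet s t ⟨h₁, h₂⟩
    have hs : s * (u.1 * v.2 - u.2 * v.1) = 0 := by linear_combination v.2 * h₁ - v.1 * h₂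
    have ht : t * (u.1 * v.2 - u.2 * v.1) = 0 := by linear_combination u.1 * h₂ - u.2 * h₁
    exact ⟨(mul_eq_zero.mp hs).resolve_right hdet, (mul_eq_zero.mp ht).resolve_right hdet⟩

theorem affineIndependent_triple_iff_linearIndependent {k V P : Type*} [Ring k] [AddCommGroup V]
    [Module k V] [AddTorsor V P] {p q r : P} :
    AffineIndependent k ![p, q, r] ↔ LinearIndependent k ![q -ᵥ p, r -ᵥ p] := by
  rw [affineIndependent_iff_linearIndependent_vsub k _ (0 : Fin 3),
    ← linearIndependent_equiv (finSuccAboveEquiv (0 : Fin 3))]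
  convert! Iff.rfl
  ext i
  fin_cases i <;> rfl

theorem collinear_prod_iff {K : Type*} [Field K] {p q r : K × K} :
    Collinear K {p, q, r} ↔ (q.1 - p.1) * (r.2 - p.2) = (q.2 - p.2) * (r.1 - p.1) := by
  rw [collinear_iff_not_affineIndependent_set, affineIndependent_triple_iff_linearIndependent,
    linearIndependent_pair_prod_iff, not_not, sub_eq_zero]
  rfl

theorem collinear_affineSpan_iff {k V P : Type*} [DivisionRing k] [AddCommGroup V] [Module k V]
    [AddTorsor V P] {s : Set P} : Collinear k (affineSpan k s : Set P) ↔ Collinear k s := by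
  rw [Collinear, ← AffineSubspace.direction_eq_vectorSpan, direction_affineSpan, Collinear]

theorem exists_fin_three_sum_eq_zero {i j l : Fin 3} (hij : i ≠ j) (hil : i ≠ l) (hjl : j ≠ l)
    (x y : Fin 2) : ∃ w : Fin 3 → Fin 2, ∑ m, w m = 0 ∧ w i = x ∧ w j = y ∧ w l = x + y := by
  decide +revert

/-- The vertices `v i x` of a complete quadrilateral, where `v i 0` and `v i 1` are opposite: six
distinct points, not all on one line, three of them on each side. A side consists of one vertex
`v i (w i)` from each opposite pair; the condition `∑ i, w i = 0`, modulo 2, singles out the four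
sides among the eight such triples. -/
structure IsCompleteQuadrilateral (k : Type*) {V P : Type*} [DivisionRing k] [AddCommGroup V]
    [Module k V] [AddTorsor V P] (v : Fin 3 → Fin 2 → P) : Prop where
  injective2 : Function.Injective2 v
  collinear_range_side : ∀ w : Fin 3 → Fin 2, ∑ i, w i = 0 →
    Collinear k (Set.range fun i ↦ v i (w i))
  not_collinear_range : ¬ Collinear k (Set.range (Function.uncurry v))

namespace IsCompleteQuadrilateral

section AffineSpace

variable {k V P : Type*} [DivisionRing k] [AddCommGroup V] [Module k V] [AddTorsor V P]
  {v : Fin 3 → Fin 2 → P} {i j l : Fin 3}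

theorem collinear_side (h : IsCompleteQuadrilateral k v) (hij : i ≠ j) (hil : i ≠ l) (hjl : j ≠ l)
    (x y : Fin 2) : Collinear k {v i x, v j y, v l (x + y)} := by
  obtain ⟨w, hw, rfl, rfl, hl⟩ := exists_fin_three_sum_eq_zero hij hil hjl x y
  refine (h.collinear_range_side w hw).subset ?_
  simp [Set.insert_subset_iff, ← hl]

theorem mem_affineSubspace_of_side (h : IsCompleteQuadrilateral k v) (hij : i ≠ j) (hil : i ≠ l)
    (hjl : j ≠ l) {L : AffineSubspace k P} {x y : Fin 2} (hx : v i x ∈ L) (hy : v j y ∈ L) :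
    v l (x + y) ∈ L := by
  have hne : v i x ≠ v j y := fun heq ↦ hij (h.injective2 heq).1
  exact affineSpan_pair_le_of_mem_of_mem hx hy <|
    (h.collinear_side hij hil hjl x y).mem_affineSpan_of_mem_of_ne (by simp) (by simp) (by simp) hne

theorem mem_affineSubspace_of_diagonal (h : IsCompleteQuadrilateral k v) (hij : i ≠ j)
    {L : AffineSubspace k P} {y : Fin 2} (hi : ∀ x, v i x ∈ L) (hj : v j y ∈ L) (m : Fin 3)
    (z : Fin 2) : v m z ∈ L := by
  obtain ⟨l, hli, hlj⟩ := Fin.exists_ne_and_ne_of_two_lt i j (by simp)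
  have hl (z : Fin 2) : v l z ∈ L := by
    simpa using h.mem_affineSubspace_of_side hij hli.symm hlj.symm (hi (z - y)) hj
  have hj' (z : Fin 2) : v j z ∈ L := by
    simpa using h.mem_affineSubspace_of_side hli.symm hij hlj (hi 0) (hl z)
  obtain rfl | rfl | rfl : m = i ∨ m = j ∨ m = l := by lia
  exacts [hi z, hj' z, hl z]

theorem not_collinear_diagonal (h : IsCompleteQuadrilateral k v) (hij : i ≠ j) {x x' : Fin 2}
    (hx : x ≠ x') (y : Fin 2) : ¬ Collinear k {v i x, v i x', v j y} := by
  intro hcol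
  have mem_span {p : P} (hp : p ∈ ({v i x, v i x', v j y} : Set P)) :
      p ∈ affineSpan k {v i x, v i x', v j y} := subset_affineSpan k _ hp
  have hi (z : Fin 2) : v i z ∈ affineSpan k {v i x, v i x', v j y} := by
    obtain rfl | rfl : z = x ∨ z = x' := by lia
    exacts [mem_span (by simp), mem_span (by simp)]
  refine h.not_collinear_range ((collinear_affineSpan_iff.mpr hcol).subset ?_)
  rintro _ ⟨⟨m, z⟩, rfl⟩
  exact h.mem_affineSubspace_of_diagonal hij hi (mem_span (p := v j y) (by simp)) m z

end AffineSpace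

section SimpleLine

variable {v : Fin 3 → Fin 2 → ℝ × ℝ}

theorem simpleLine_diagonal (h : IsCompleteQuadrilateral ℝ v) (i : Fin 3) {x x' : Fin 2}
    (hx : x ≠ x') : SimpleLine (Set.range (Function.uncurry v)) (v i x) (v i x') := by
  refine ⟨⟨(i, x), rfl⟩, ⟨(i, x'), rfl⟩, fun heq ↦ hx (h.injective2 heq).2, ?_⟩
  rintro _ ⟨⟨j, y⟩, rfl⟩ hcol
  obtain rfl : i = j := by
    by_contra hij
    exact h.not_collinear_diagonal hij hx y hcol
  obtain rfl | rfl : y = x ∨ y = x' := by lia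
  exacts [.inl rfl, .inr rfl]

theorem eq_of_simpleLine (h : IsCompleteQuadrilateral ℝ v) {i j : Fin 3} {x y : Fin 2}
    (hs : SimpleLine (Set.range (Function.uncurry v)) (v i x) (v j y)) : i = j := by
  by_contra hij
  obtain ⟨l, hli, hlj⟩ := Fin.exists_ne_and_ne_of_two_lt i j (by simp)
  rcases hs.2.2.2 _ ⟨(l, x + y), rfl⟩ (h.collinear_side hij hli.symm hlj.symm x y) with heq | heq
  · exact hli (h.injective2 heq).1
  · exact hlj (h.injective2 heq).1

theorem simpleLine_iff (h : IsCompleteQuadrilateral ℝ v) {p q : ℝ × ℝ} :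
    SimpleLine (Set.range (Function.uncurry v)) p q ↔
      ∃ i, ({p, q} : Set (ℝ × ℝ)) = {v i 0, v i 1} := by
  simp only [Set.pair_eq_pair_iff]
  constructor
  · intro hs
    obtain ⟨⟨⟨i, x⟩, rfl⟩, ⟨⟨j, y⟩, rfl⟩, hne, -⟩ := id hs
    obtain rfl : i = j := h.eq_of_simpleLine hs
    have hxy : x ≠ y := fun heq ↦ hne (by rw [heq])
    obtain ⟨rfl, rfl⟩ | ⟨rfl, rfl⟩ : x = 0 ∧ y = 1 ∨ x = 1 ∧ y = 0 := by lia
    exacts [⟨i, .inl ⟨rfl, rfl⟩⟩, ⟨i, .inr ⟨rfl, rfl⟩⟩]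
  · rintro ⟨i, ⟨rfl, rfl⟩ | ⟨rfl, rfl⟩⟩
    exacts [h.simpleLine_diagonal i zero_ne_one, h.simpleLine_diagonal i one_ne_zero]

end SimpleLine

end IsCompleteQuadrilateral

/-- The six points of `six_points_simple_lines`, arranged so that each row is a pair of opposite
vertices of a complete quadrilateral. -/
noncomputable def sixPoints : Fin 3 → Fin 2 → ℝ × ℝ
  | 0 => ![(-2, 0), (2, 0)]
  | 1 => ![(-1, 2), (1, 2)]
  | 2 => ![(0, 4), (0, 4 / 3)]

theorem range_uncurry_sixPoints : Set.range (Function.uncurry sixPoints) =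
    {(-2, 0), (2, 0), (-1, 2), (1, 2), (0, 4), (0, 4 / 3)} := by
  ext p
  simp [sixPoints, Fin.exists_fin_succ, or_assoc, eq_comm (b := p)]

theorem isCompleteQuadrilateral_sixPoints : IsCompleteQuadrilateral ℝ sixPoints where
  injective2 i j x y h := by
    revert h
    fin_cases i <;> fin_cases j <;> fin_cases x <;> fin_cases y <;> norm_num [sixPoints]
  collinear_range_side w hw := by
    have hside : ∀ x y, Collinear ℝ {sixPoints 0 x, sixPoints 1 y, sixPoints 2 (x + y)} := by
      have one_add_one : (1 + 1 : Fin 2) = 0 := rfl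
      simp only [Fin.forall_fin_two, collinear_prod_iff, one_add_one]
      norm_num [sixPoints]
    have hw₂ : w 2 = w 0 + w 1 := by
      clear * - hw
      decide +revert
    refine (hside (w 0) (w 1)).subset ?_
    rintro _ ⟨i, rfl⟩
    fin_cases i <;> simp [hw₂]
  not_collinear_range h := by
    have htriple : Collinear ℝ {sixPoints 0 0, sixPoints 0 1, sixPoints 1 0} :=
      h.subset <| by
        rintro _ (rfl | rfl | rfl)
        exacts [⟨(0, 0), rfl⟩, ⟨(0, 1), rfl⟩, ⟨(1, 0), rfl⟩]
    norm_num [collinear_prod_iff, sixPoints] at htriple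

/-- In the set `V = {(-2,0), (2,0), (-1,2), (1,2), (0,4),
(0,4/3)}` there are exactly three simple lines: `L_{(-2,0),(2,0)}`,
`L_{(-1,2),(1,2)}` and `L_{(0,4),(0,4/3)}`. -/
theorem six_points_simple_lines :
    let V : Set (ℝ × ℝ) := {(-2, 0), (2, 0), (-1, 2), (1, 2), (0, 4), (0, 4/3)}
    ∀ a ∈ V, ∀ b ∈ V, a ≠ b →
      (SimpleLine V a b ↔
        (({a, b} : Set (ℝ × ℝ)) = {(-2, 0), (2, 0)} ∨
         ({a, b} : Set (ℝ × ℝ)) = {(-1, 2), (1, 2)} ∨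
         ({a, b} : Set (ℝ × ℝ)) = {(0, 4), (0, 4/3)})) := by
  intro V a _ b _ _
  have hV : V = Set.range (Function.uncurry sixPoints) := range_uncurry_sixPoints.symm
  rw [hV, isCompleteQuadrilateral_sixPoints.simpleLine_iff]
  simp [sixPoints, Fin.exists_fin_succ]
end

section
/- Let W = {(-2,0), (2,0), (-1,2), (1,2), (0,4), (0,4/3), (0,2), (-2/3,8/3), (2/3,8/3)} ⊆ ℝ², and set a = (-2,0), b = (2,0). Then W is a set of 9 points, not all contained in a single line, the line L_{a,b} is a simple line of W, but no simple wedge can be created from L_{a,b}: there is no point c ∈ W \ {a,b} such that L_{a,c} or L_{b,c} is a simple line of W. (Note that |W| = 9 is odd, but W is not 3-bounded.) -/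
/-!
The three lines through `(-2, 0)` of slopes `2`, `1` and `2/3` cover the points of `W` off the
`x`-axis, and each of them carries at least two such points; hence none of the lines joining
`(-2, 0)` to these points is simple. Reflection in the `y`-axis preserves `W` and exchanges the
points `(±2, 0)`, so the same holds at `(2, 0)`. The line of slope `2` contains four points of `W`.
-/

section Collinearity

variable {k V P : Type*} [DivisionRing k] [AddCommGroup V] [Module k V] [AddTorsor V P]

theorem collinear_triple_iff_mem_affineSpan {a b c : P} (hab : a ≠ b) :
    Collinear k {a, b, c} ↔ c ∈ line[k, a, b] := by
  have hperm : ({a, b, c} : Set P) = {c, a, b} := by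
    rw [Set.insert_comm c, Set.pair_comm c]
  rw [hperm]
  exact ⟨fun h => h.mem_affineSpan_of_mem_of_ne (by simp) (by simp) (by simp) hab,
    collinear_insert_of_mem_affineSpan_pair⟩

theorem collinear_triple_iff_exists_smul {a b c : P} (hab : a ≠ b) :
    Collinear k {a, b, c} ↔ ∃ r : k, r • (b -ᵥ a) = c -ᵥ a := by
  rw [collinear_triple_iff_mem_affineSpan hab, ← vadd_left_mem_affineSpan_pair, vsub_vadd]

theorem collinear_image {V' P' : Type*} [AddCommGroup V'] [Module k V'] [AddTorsor V' P']
    {s : Set P} (hs : Collinear k s) (f : P →ᵃ[k] P') : Collinear k (f '' s) := by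
  obtain ⟨p₀, v, hv⟩ := (collinear_iff_exists_forall_eq_smul_vadd s).mp hs
  refine (collinear_iff_exists_forall_eq_smul_vadd _).mpr ⟨f p₀, f.linear v, ?_⟩
  rintro _ ⟨p, hp, rfl⟩
  obtain ⟨r, rfl⟩ := hv p hp
  exact ⟨r, by simp⟩

theorem exists_smul_eq_iff_mul_eq_mul {K : Type*} [Field K] {u v : K × K} (hu : u ≠ 0) :
    (∃ r : K, r • u = v) ↔ u.1 * v.2 = v.1 * u.2 := by
  constructor
  · rintro ⟨r, rfl⟩
    simp only [Prod.smul_fst, Prod.smul_snd, smul_eq_mul]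
    ring
  · intro h
    rcases eq_or_ne u.1 0 with h₁ | h₁
    · have h₂ : u.2 ≠ 0 := fun h₂ => hu (Prod.ext h₁ h₂)
      have hv : v.1 = 0 := by simpa [h₁, h₂] using h
      exact ⟨v.2 / u.2, Prod.ext (by simp [h₁, hv]) (by simp [h₂])⟩
    · refine ⟨v.1 / u.1, Prod.ext (by simp [h₁]) ?_⟩
      simp only [Prod.smul_snd, smul_eq_mul]
      field_simp
      exact h.symm

theorem collinear_triple_iff_mul_eq_mul {K : Type*} [Field K] {a b c : K × K} :
    Collinear K {a, b, c} ↔ (b.1 - a.1) * (c.2 - a.2) = (c.1 - a.1) * (b.2 - a.2) := by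
  rcases eq_or_ne a b with rfl | hab
  · simp [collinear_pair]
  · exact (collinear_triple_iff_exists_smul hab).trans
      (exists_smul_eq_iff_mul_eq_mul (sub_ne_zero.mpr hab.symm))

end Collinearity

theorem SimpleLine.not_collinear {V : Set (ℝ × ℝ)} {a b c : ℝ × ℝ} (h : SimpleLine V a b)
    (hc : c ∈ V) (hca : c ≠ a) (hcb : c ≠ b) : ¬ Collinear ℝ V := by
  obtain ⟨ha, hb, -, hsimple⟩ := h
  intro hV
  have habc : {a, b, c} ⊆ V := by
    simp [Set.insert_subset_iff, ha, hb, hc]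
  exact (hsimple c hc (hV.subset habc)).elim hca hcb

theorem SimpleLine.image {V : Set (ℝ × ℝ)} {a b : ℝ × ℝ} (h : SimpleLine V a b)
    (e : (ℝ × ℝ) ≃ᵃ[ℝ] (ℝ × ℝ)) : SimpleLine (e '' V) (e a) (e b) := by
  obtain ⟨ha, hb, hab, hsimple⟩ := h
  refine ⟨Set.mem_image_of_mem e ha, Set.mem_image_of_mem e hb, e.injective.ne hab, ?_⟩
  rintro _ ⟨c, hc, rfl⟩ hcol
  have habc : Collinear ℝ {a, b, c} := by
    simpa [Set.image_insert_eq] using collinear_image hcol e.symm.toAffineMap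
  exact (hsimple c hc habc).imp (congrArg e) (congrArg e)

theorem ThreeBounded.ncard_le_three {V s : Set (ℝ × ℝ)} (hV : ThreeBounded V) (hfin : V.Finite)
    (hsV : s ⊆ V) (hs : Collinear ℝ s) : s.ncard ≤ 3 := by
  rcases s.subsingleton_or_nontrivial with hsub | ⟨a, ha, b, hb, hab⟩
  · exact ((Set.ncard_le_one (hfin.subset hsV)).mpr fun _ ha _ hb => hsub ha hb).trans
      (by norm_num)
  · have hsub : s ⊆ {c ∈ V | Collinear ℝ {a, b, c}} := fun c hc =>
      ⟨hsV hc, hs.subset (by simp [Set.insert_subset_iff, ha, hb, hc])⟩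
    exact (Set.ncard_le_ncard hsub (hfin.subset (Set.sep_subset _ _))).trans
      (hV a (hsV ha) b (hsV hb) hab)

/-- The configuration `W` of the theorem, with the endpoints `a` and `b` listed first. -/
def ninePoints : Set (ℝ × ℝ) :=
  {(-2, 0), (2, 0), (-1, 2), (1, 2), (0, 4), (0, 4/3), (0, 2), (-2/3, 8/3), (2/3, 8/3)}

theorem finite_ninePoints : ninePoints.Finite := by
  unfold ninePoints
  exact Set.toFinite _

theorem ncard_ninePoints : ninePoints.ncard = 9 := by
  unfold ninePoints
  repeat rw [Set.ncard_insert_of_notMem (by norm_num) (Set.toFinite _)]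
  rw [Set.ncard_singleton]

theorem simpleLine_ninePoints : SimpleLine ninePoints (-2, 0) (2, 0) := by
  refine ⟨by simp [ninePoints], by simp [ninePoints], by norm_num, fun c hc hcol => ?_⟩
  have hc₂ : c.2 = 0 := by
    linear_combination (1 / 4) * collinear_triple_iff_mul_eq_mul.mp hcol
  rcases hc with rfl | rfl | rfl | rfl | rfl | rfl | rfl | rfl | rfl <;>
    norm_num at hc₂ <;> norm_num

theorem not_threeBounded_ninePoints : ¬ ThreeBounded ninePoints := by
  intro h
  let s : Set (ℝ × ℝ) := {(-2, 0), (-1, 2), (-2/3, 8/3), (0, 4)}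
  have hsub : s ⊆ ninePoints := by
    norm_num [s, ninePoints, Set.insert_subset_iff]
  have hcol : Collinear ℝ s := by
    refine (collinear_iff_of_mem (p₀ := (-2, 0)) (by simp [s])).mpr ⟨(1, 2), ?_⟩
    rintro p (rfl | rfl | rfl | rfl)
    exacts [⟨0, by norm_num⟩, ⟨1, by norm_num⟩, ⟨4/3, by norm_num⟩, ⟨2, by norm_num⟩]
  have hcard : s.ncard = 4 := by
    repeat rw [Set.ncard_insert_of_notMem (by norm_num) (Set.toFinite _)]
    rw [Set.ncard_singleton]
  have hle : s.ncard ≤ 3 := h.ncard_le_three finite_ninePoints hsub hcol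
  omega

theorem exists_mem_ninePoints_collinear_left {c : ℝ × ℝ} (hc : c ∈ ninePoints) (hca : c ≠ (-2, 0))
    (hcb : c ≠ (2, 0)) :
    ∃ d ∈ ninePoints, d ≠ (-2, 0) ∧ d ≠ c ∧ Collinear ℝ {(-2, 0), c, d} := by
  simp only [collinear_triple_iff_mul_eq_mul]
  rcases hc with rfl | rfl | rfl | rfl | rfl | rfl | rfl | rfl | rfl
  · exact absurd rfl hca
  · exact absurd rfl hcb
  · exact ⟨(0, 4), by norm_num [ninePoints]⟩
  · exact ⟨(0, 4/3), by norm_num [ninePoints]⟩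
  · exact ⟨(-1, 2), by norm_num [ninePoints]⟩
  · exact ⟨(1, 2), by norm_num [ninePoints]⟩
  · exact ⟨(2/3, 8/3), by norm_num [ninePoints]⟩
  · exact ⟨(0, 4), by norm_num [ninePoints]⟩
  · exact ⟨(0, 2), by norm_num [ninePoints]⟩

theorem not_simpleLine_ninePoints_left {c : ℝ × ℝ} (hcb : c ≠ (2, 0)) :
    ¬ SimpleLine ninePoints (-2, 0) c := by
  rintro ⟨-, hc, hac, hsimple⟩
  obtain ⟨d, hd, hda, hdc, hcol⟩ := exists_mem_ninePoints_collinear_left hc hac.symm hcb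
  exact (hsimple d hd hcol).elim hda hdc

/-- The reflection `(x, y) ↦ (-x, y)` of the plane in the `y`-axis, a symmetry of `ninePoints`. -/
def yAxisReflection : (ℝ × ℝ) ≃ᵃ[ℝ] (ℝ × ℝ) :=
  ((LinearEquiv.neg ℝ).prodCongr (LinearEquiv.refl ℝ ℝ)).toAffineEquiv

@[simp]
theorem yAxisReflection_apply (p : ℝ × ℝ) : yAxisReflection p = (-p.1, p.2) := rfl

theorem yAxisReflection_image_ninePoints : yAxisReflection '' ninePoints = ninePoints := by
  ext p
  simp only [ninePoints, Set.image_insert_eq, Set.image_singleton, yAxisReflection_apply,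
    neg_div, neg_neg, neg_zero, Set.mem_insert_iff, Set.mem_singleton_iff]
  tauto

theorem not_simpleLine_ninePoints_right {c : ℝ × ℝ} (hca : c ≠ (-2, 0)) :
    ¬ SimpleLine ninePoints (2, 0) c := by
  intro h
  have hrefl : SimpleLine ninePoints (-2, 0) (yAxisReflection c) := by
    simpa [yAxisReflection_image_ninePoints] using h.image yAxisReflection
  refine not_simpleLine_ninePoints_left (fun hc => hca ?_) hrefl
  exact yAxisReflection.injective (by simpa using hc)

/-- The explicit set `W` of `9` non-collinear points has the
simple line `L_{a,b}` with `a = (-2,0)`, `b = (2,0)`, but no simple wedge can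
be created from `L_{a,b}`; note `|W| = 9` is odd but `W` is not `3`-bounded. -/
theorem nine_points_no_wedge_from_simple_line :
    let W : Set (ℝ × ℝ) := {(-2, 0), (2, 0), (-1, 2), (1, 2), (0, 4), (0, 4/3),
      (0, 2), (-2/3, 8/3), (2/3, 8/3)}
    let a : ℝ × ℝ := (-2, 0)
    let b : ℝ × ℝ := (2, 0)
    W.ncard = 9 ∧ ¬ Collinear ℝ W ∧ SimpleLine W a b ∧
      (¬ ∃ c ∈ W, c ≠ a ∧ c ≠ b ∧ (SimpleLine W a c ∨ SimpleLine W b c)) ∧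
      Odd W.ncard ∧ ¬ ThreeBounded W := by
  intro W a b
  have hncard : W.ncard = 9 := ncard_ninePoints
  have hsimple : SimpleLine W a b := simpleLine_ninePoints
  have hnoncollinear : ¬ Collinear ℝ W :=
    hsimple.not_collinear (c := (0, 4)) (by simp [W]) (by simp [a]) (by simp [b])
  have hodd : Odd W.ncard := by rw [hncard]; decide
  refine ⟨hncard, hnoncollinear, hsimple, ?_, hodd, not_threeBounded_ninePoints⟩
  rintro ⟨c, -, hca, hcb, hac | hbc⟩
  · exact not_simpleLine_ninePoints_left hcb hac
  · exact not_simpleLine_ninePoints_right hca hbc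
end

section
/- Let V be a finite set of points in the real plane ℝ², not all contained in a single line, with |V| ∈ {3, 4, 5}. Then V contains a simple wedge: there exist three distinct points a, b, c ∈ V such that L_{a,b} and L_{a,c} are both simple lines of V. -/
/-!
Suppose more than half of a finite set `s` lies in an affine subspace `L`, and let `d ∈ s` lie off
`L`. If the line through `d` and `x ∈ s ∩ L` is not simple, then it passes through another point of
`s`, which is off `L` because the line already meets `L` in `x`; that point determines the line,
hence `x`. So fewer than `|s \ L|` of the points of `s ∩ L` fail to form a simple line with `d`,
and at least two succeed.

Now let `s` be non-collinear with at most five points, and pick a non-collinear triple `a, b, c` in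
`s`. If the lines `ab` and `ac` are both simple, they form a wedge. Otherwise one of them contains
three points of `s`, and at most two points of `s` lie off it.
-/

open Set

variable {k V P : Type*} [DivisionRing k] [AddCommGroup V] [Module k V] [AddTorsor V P]
  {s : Set P} {a b c : P}

section Collinear

theorem collinear_triple_iff_mem_line (hab : a ≠ b) :
    Collinear k {a, b, c} ↔ c ∈ line[k, a, b] where
  mp h := h.mem_affineSpan_of_mem_of_ne (by simp) (by simp) (by simp) hab
  mpr h := collinear_triple_of_mem_affineSpan_pair (left_mem_affineSpan_pair k a b)
    (right_mem_affineSpan_pair k a b) h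

variable (k) in
theorem collinear_line (a b : P) : Collinear k (line[k, a, b] : Set P) := by
  refine (collinear_iff_of_mem (left_mem_affineSpan_pair k a b)).2 ⟨b -ᵥ a, fun p hp ↦ ?_⟩
  obtain ⟨r, rfl⟩ := mem_affineSpan_pair_iff_exists_lineMap_eq.1 hp
  exact ⟨r, AffineMap.lineMap_apply a b r⟩

theorem not_subset_line_of_not_collinear (hs : ¬ Collinear k s) (a b : P) :
    ¬ s ⊆ line[k, a, b] :=
  fun h ↦ hs ((collinear_line k a b).subset h)

theorem nontrivial_of_not_collinear (hs : ¬ Collinear k s) : s.Nontrivial := by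
  contrapose! hs
  obtain rfl | ⟨p, rfl⟩ := hs.eq_empty_or_singleton
  · exact collinear_empty k P
  · exact collinear_singleton k p

theorem exists_triple_not_collinear (hs : ¬ Collinear k s) :
    ∃ a ∈ s, ∃ b ∈ s, ∃ c ∈ s, ¬ Collinear k {a, b, c} := by
  obtain ⟨a, ha, b, hb, hab⟩ := nontrivial_of_not_collinear hs
  obtain ⟨c, hc, hcab⟩ := not_subset.1 (not_subset_line_of_not_collinear hs a b)
  exact ⟨a, ha, b, hb, c, hc, mt (collinear_triple_iff_mem_line hab).1 hcab⟩

end Collinear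

variable (k s) in
/-- The line through `a` and `b` is a simple line of `s`, in an affine space over any division
ring. Written so that `SimpleLine` unfolds to the case of the real plane. -/
def IsSimpleLine (a b : P) : Prop :=
  a ∈ s ∧ b ∈ s ∧ a ≠ b ∧ ∀ c ∈ s, Collinear k {a, b, c} → c = a ∨ c = b

variable (k s) in
/-- The set `s` contains a simple wedge: two simple lines of `s` with a common point `a`. -/
def HasSimpleWedge : Prop :=
  ∃ a ∈ s, ∃ b ∈ s, ∃ c ∈ s, a ≠ b ∧ a ≠ c ∧ b ≠ c ∧ IsSimpleLine k s a b ∧ IsSimpleLine k s a c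

theorem IsSimpleLine.hasSimpleWedge (hab : IsSimpleLine k s a b) (hac : IsSimpleLine k s a c)
    (hbc : b ≠ c) : HasSimpleWedge k s :=
  ⟨a, hab.1, b, hab.2.1, c, hac.2.1, hab.2.2.1, hac.2.2.1, hbc, hab, hac⟩

theorem exists_mem_line_of_not_isSimpleLine (ha : a ∈ s) (hb : b ∈ s) (hab : a ≠ b)
    (h : ¬ IsSimpleLine k s a b) : ∃ c ∈ s, c ∈ line[k, a, b] ∧ c ≠ a ∧ c ≠ b := by
  contrapose! h
  exact ⟨ha, hb, hab, fun c hc hcol ↦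
    or_iff_not_imp_left.2 (h c hc ((collinear_triple_iff_mem_line hab).1 hcol))⟩

theorem three_le_encard_inter_line (ha : a ∈ s) (hb : b ∈ s) (hab : a ≠ b)
    (h : ¬ IsSimpleLine k s a b) : 3 ≤ (s ∩ line[k, a, b]).encard := by
  obtain ⟨c, hc, hcab, hca, hcb⟩ := exists_mem_line_of_not_isSimpleLine ha hb hab h
  rw [← encard_eq_three.2 ⟨a, b, c, hab, hca.symm, hcb.symm, rfl⟩]
  refine encard_le_encard ?_
  rintro x (rfl | rfl | rfl)
  · exact ⟨ha, left_mem_affineSpan_pair k x b⟩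
  · exact ⟨hb, right_mem_affineSpan_pair k a x⟩
  · exact ⟨hc, hcab⟩

section AffineSubspace

variable {L : AffineSubspace k P} {d e : P}

variable (e) in
theorem subsingleton_line_inter_of_notMem (hd : d ∉ L) :
    (line[k, d, e] ∩ L : Set P).Subsingleton := by
  rintro x ⟨hx, hxL⟩ y ⟨hy, hyL⟩
  by_contra hxy
  have hline : line[k, x, y] = line[k, d, e] := affineSpan_pair_eq_of_mem_of_mem_of_ne hx hy hxy
  have hdxy : d ∈ line[k, x, y] := hline ▸ left_mem_affineSpan_pair k d e
  exact hd (affineSpan_pair_le_of_mem_of_mem hxL hyL hdxy)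

theorem encard_not_isSimpleLine_le (hds : d ∈ s) (hd : d ∉ L) :
    {x ∈ s ∩ L | ¬ IsSimpleLine k s d x}.encard ≤ ((s \ L) \ {d}).encard := by
  have third_point (x : P) (hx : x ∈ {x ∈ s ∩ L | ¬ IsSimpleLine k s d x}) :
      ∃ e ∈ s, e ∈ line[k, d, x] ∧ e ≠ d ∧ e ≠ x :=
    exists_mem_line_of_not_isSimpleLine hds hx.1.1 (fun h ↦ hd (h ▸ hx.1.2)) hx.2
  choose! e hes hel hed hex using third_point
  have mem_line (x : P) (hx : x ∈ {x ∈ s ∩ L | ¬ IsSimpleLine k s d x}) :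
      x ∈ line[k, d, e x] := by
    rw [affineSpan_pair_eq_of_right_mem_of_ne (hel x hx) (hed x hx)]
    exact right_mem_affineSpan_pair k d x
  refine encard_le_encard_of_injOn (f := e) (fun x hx ↦ ⟨⟨hes x hx, fun heL ↦ ?_⟩, hed x hx⟩)
    (fun x hx y hy hxy ↦ ?_)
  · exact hex x hx <| subsingleton_line_inter_of_notMem x hd ⟨hel x hx, heL⟩
      ⟨right_mem_affineSpan_pair k d x, hx.1.2⟩
  · exact subsingleton_line_inter_of_notMem (e x) hd ⟨mem_line x hx, hx.1.2⟩
      ⟨hxy ▸ mem_line y hy, hy.1.2⟩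

theorem hasSimpleWedge_of_encard_sdiff_lt_encard_inter (hsL : ¬ s ⊆ L)
    (h : (s \ L).encard < (s ∩ L).encard) : HasSimpleWedge k s := by
  obtain ⟨d, hds, hd⟩ := not_subset.1 hsL
  suffices {x ∈ s ∩ L | IsSimpleLine k s d x}.Nontrivial by
    obtain ⟨x, hx, y, hy, hxy⟩ := this
    exact hx.2.hasSimpleWedge hy.2 hxy
  contrapose! h
  have hcover : s ∩ L ⊆ {x ∈ s ∩ L | ¬ IsSimpleLine k s d x} ∪ {x ∈ s ∩ L | IsSimpleLine k s d x} :=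
    fun x hx ↦ (em (IsSimpleLine k s d x)).symm.imp (⟨hx, ·⟩) (⟨hx, ·⟩)
  calc (s ∩ L).encard
    _ ≤ {x ∈ s ∩ L | ¬ IsSimpleLine k s d x}.encard + {x ∈ s ∩ L | IsSimpleLine k s d x}.encard :=
        (encard_le_encard hcover).trans (encard_union_le _ _)
    _ ≤ ((s \ L) \ {d}).encard + 1 :=
        add_le_add (encard_not_isSimpleLine_le hds hd) (encard_le_one_iff_subsingleton.2 h)
    _ = (s \ L).encard := encard_sdiff_singleton_add_one ⟨hds, hd⟩

end AffineSubspace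

theorem hasSimpleWedge_of_encard_le_five_of_not_isSimpleLine (hs : ¬ Collinear k s)
    (hcard : s.encard ≤ 5) (ha : a ∈ s) (hb : b ∈ s) (hab : a ≠ b) (h : ¬ IsSimpleLine k s a b) :
    HasSimpleWedge k s := by
  have three_le := three_le_encard_inter_line ha hb hab h
  refine hasSimpleWedge_of_encard_sdiff_lt_encard_inter (not_subset_line_of_not_collinear hs a b) ?_
  by_contra! hle
  have : (3 + 3 : ℕ∞) ≤ 5 := calc
    3 + 3 ≤ (s \ line[k, a, b]).encard + (s ∩ line[k, a, b]).encard :=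
      add_le_add (three_le.trans hle) three_le
    _ = s.encard := encard_sdiff_add_encard_inter s _
    _ ≤ 5 := hcard
  norm_num at this

theorem small_sets_have_simple_wedge_general (hs : ¬ Collinear k s) (hcard : s.encard ≤ 5) :
    HasSimpleWedge k s := by
  obtain ⟨a, ha, b, hb, c, hc, habc⟩ := exists_triple_not_collinear hs
  by_cases hab : IsSimpleLine k s a b
  · by_cases hac : IsSimpleLine k s a c
    · exact hab.hasSimpleWedge hac (ne₂₃_of_not_collinear habc)
    · exact hasSimpleWedge_of_encard_le_five_of_not_isSimpleLine hs hcard ha hc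
        (ne₁₃_of_not_collinear habc) hac
  · exact hasSimpleWedge_of_encard_le_five_of_not_isSimpleLine hs hcard ha hb
      (ne₁₂_of_not_collinear habc) hab

/-- Every non-collinear configuration of `3`, `4` or `5`
points in the plane has a simple wedge. -/
theorem small_sets_have_simple_wedge (V : Set (ℝ × ℝ)) (hfin : V.Finite)
    (hline : ¬ Collinear ℝ V)
    (hcard : V.ncard = 3 ∨ V.ncard = 4 ∨ V.ncard = 5) :
    ∃ a ∈ V, ∃ b ∈ V, ∃ c ∈ V, a ≠ b ∧ a ≠ c ∧ b ≠ c ∧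
      SimpleLine V a b ∧ SimpleLine V a c := by
  have hcard_le : V.ncard ≤ 5 := by omega
  exact small_sets_have_simple_wedge_general hline (hfin.cast_ncard_eq ▸ mod_cast hcard_le)
end

section
/- For every even natural number n > 6, there exists a 3-bounded set V of n points in the real plane ℝ², not all contained in a single line, and a simple line L_{a,b} of V from which no simple wedge can be created: there is no point c ∈ V \ {a,b} such that L_{a,c} or L_{b,c} is a simple line of V. -/
/-!
The vertices of a regular `2k`-gon are the complex roots of unity of order `2k`, and the chord
joining `z` and `w` on the unit circle has a direction that depends only on `z * w`. Hence for a
primitive root `ζ` the map `z ↦ ζ / z` pairs off the vertices along parallel chords, without fixed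
points because `ζ` is not a square of a vertex, and so does `z ↦ ζ⁻¹ / z` in a second direction.
Add the two points at infinity `a, b` in these directions. A line other than `L_{a,b}` contains at
most one of `a, b` and at most two vertices, the line at infinity `L_{a,b}` misses the vertices, and
every line joining `a` or `b` to a vertex contains the partner of that vertex. A projective map
moves the configuration into the affine plane.
-/

theorem exists_eq_smul_of_mul_eq_mul {K : Type*} [Field K] {d w : K × K} (hd : d ≠ 0)
    (h : d.1 * w.2 = w.1 * d.2) : ∃ t : K, w = t • d := by
  by_cases h_fst : d.1 = 0
  · have h_snd : d.2 ≠ 0 := fun h_snd ↦ hd (Prod.ext h_fst h_snd)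
    have hw_fst : w.1 = 0 := by simpa [h_fst, h_snd] using h.symm
    exact ⟨w.2 / d.2, Prod.ext (by simp [h_fst, hw_fst]) (by simp [h_snd])⟩
  · refine ⟨w.1 / d.1, Prod.ext (by simp [h_fst]) ?_⟩
    rw [Prod.smul_snd, smul_eq_mul, div_mul_eq_mul_div, ← h, mul_div_cancel_left₀ _ h_fst]

theorem collinear_triple_iff_mul_eq_mul_s15 {K E : Type*} [Field K] [AddCommGroup E] [Module K E]
    (e : E ≃ₗ[K] K × K) (p q r : E) :
    Collinear K {p, q, r} ↔
      (e (q - p)).1 * (e (r - p)).2 = (e (r - p)).1 * (e (q - p)).2 := by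
  constructor
  · intro h
    obtain ⟨v, hv⟩ := (collinear_iff_of_mem (p₀ := p) (by simp)).1 h
    obtain ⟨s, rfl⟩ := hv q (by simp)
    obtain ⟨t, rfl⟩ := hv r (by simp)
    simp only [vadd_eq_add, add_sub_cancel_right, map_smul, Prod.smul_fst, Prod.smul_snd,
      smul_eq_mul]
    ring
  · intro h
    obtain rfl | hqp := eq_or_ne q p
    · simpa using collinear_pair K q r
    obtain ⟨t, ht⟩ := exists_eq_smul_of_mul_eq_mul (e.map_ne_zero_iff.2 (sub_ne_zero.2 hqp)) h
    rw [← map_smul, e.injective.eq_iff, sub_eq_iff_eq_add] at ht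
    refine (collinear_iff_of_mem (p₀ := p) (by simp)).2 ⟨q - p, ?_⟩
    rintro x (rfl | rfl | rfl)
    · exact ⟨0, by simp⟩
    · exact ⟨1, by simp⟩
    · exact ⟨t, ht⟩

section GeneralPosition

variable {K V P : Type*} [DivisionRing K] [AddCommGroup V] [Module K V] [AddTorsor V P]

/-- The points of `C` are in general position: no line contains three of them. -/
def NoThreeCollinear (K : Type*) {V P : Type*} [DivisionRing K] [AddCommGroup V] [Module K V]
    [AddTorsor V P] (C : Set P) : Prop :=
  ∀ p ∈ C, ∀ q ∈ C, ∀ r ∈ C, p ≠ q → p ≠ r → q ≠ r → ¬ Collinear K {p, q, r}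

theorem NoThreeCollinear.encard_le_two {C : Set P} (hC : NoThreeCollinear K C) {u v : P} {t : Set P}
    (htC : t ⊆ C) (ht : t ⊆ line[K, u, v]) : t.encard ≤ 2 := by
  by_contra! h
  obtain ⟨t', ht't, ht'⟩ := Set.exists_subset_encard_eq (Order.add_one_le_of_lt h)
  obtain ⟨p, q, r, hpq, hpr, hqr, rfl⟩ := Set.encard_eq_three.1 (ht'.trans (by norm_num))
  simp only [Set.insert_subset_iff, Set.singleton_subset_iff] at ht't
  obtain ⟨hp, hq, hr⟩ := ht't
  exact hC p (htC hp) q (htC hq) r (htC hr) hpq hpr hqr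
    (collinear_triple_of_mem_affineSpan_pair (ht hp) (ht hq) (ht hr))

theorem not_collinear_insert_insert {a b : P} {C : Set P} (hC : C.Nonempty)
    (hab : ∀ c ∈ C, ¬ Collinear K {a, b, c}) : ¬ Collinear K (insert a (insert b C)) := by
  obtain ⟨c, hc⟩ := hC
  refine fun h ↦ hab c hc (h.subset ?_)
  exact Set.insert_subset_insert (Set.insert_subset_insert (Set.singleton_subset_iff.2 hc))

theorem ncard_insert_insert {a b : P} {C : Set P} (hfin : C.Finite) (hne : a ≠ b)
    (hab : ∀ c ∈ C, ¬ Collinear K {a, b, c}) :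
    (insert a (insert b C)).ncard = C.ncard + 2 := by
  have ha : a ∉ C := fun h ↦ ne₁₃_of_not_collinear (hab a h) rfl
  have hb : b ∉ C := fun h ↦ ne₂₃_of_not_collinear (hab b h) rfl
  rw [Set.ncard_insert_of_notMem (by simp [hne, ha]) (hfin.insert b),
    Set.ncard_insert_of_notMem hb hfin]

end GeneralPosition

section InsertInsert

variable {a b : ℝ × ℝ} {C : Set (ℝ × ℝ)}

theorem threeBounded_insert_insert (hC : NoThreeCollinear ℝ C)
    (hab : ∀ c ∈ C, ¬ Collinear ℝ {a, b, c}) : ThreeBounded (insert a (insert b C)) := by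
  intro u _ v _ huv
  set L : Set (ℝ × ℝ) := {c ∈ insert a (insert b C) | Collinear ℝ {u, v, c}}
  have hL_line : L ⊆ line[ℝ, u, v] := fun c hc ↦
    hc.2.mem_affineSpan_of_mem_of_ne (by simp) (by simp) (by simp) huv
  have hLC : (L ∩ C).encard ≤ 2 :=
    hC.encard_le_two Set.inter_subset_right (Set.inter_subset_left.trans hL_line)
  have hL_insert {x : ℝ × ℝ} (hx : L ⊆ insert x (L ∩ C)) : L.ncard ≤ 3 := by
    refine (Set.encard_le_coe_iff_finite_ncard_le.1 ?_).2
    calc L.encard ≤ (insert x (L ∩ C)).encard := Set.encard_le_encard hx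
      _ ≤ (L ∩ C).encard + 1 := Set.encard_insert_le _ _
      _ ≤ 2 + 1 := by gcongr
  have hL_cases : ∀ x ∈ L, x = a ∨ x = b ∨ x ∈ L ∩ C := fun x hx ↦
    hx.1.imp_right (Or.imp_right fun hxC ↦ ⟨hx, hxC⟩)
  by_cases ha : a ∈ L
  · by_cases hb : b ∈ L
    · have hL_sub : L ⊆ {a, b} := fun x hx ↦ (hL_cases x hx).imp_right fun h ↦
        h.resolve_right fun hxC ↦ hab x hxC.2 <|
          collinear_triple_of_mem_affineSpan_pair (hL_line ha) (hL_line hb) (hL_line hx)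
      calc L.ncard ≤ ({a, b} : Set (ℝ × ℝ)).ncard := Set.ncard_le_ncard hL_sub
        _ ≤ ({b} : Set (ℝ × ℝ)).ncard + 1 := Set.ncard_insert_le a {b}
        _ ≤ 3 := by simp
    · exact hL_insert fun x hx ↦ (hL_cases x hx).imp_right fun h ↦
        h.resolve_left (ne_of_mem_of_not_mem hx hb)
  · exact hL_insert fun x hx ↦ (hL_cases x hx).resolve_left (ne_of_mem_of_not_mem hx ha)

theorem simpleLine_insert_insert (hne : a ≠ b) (hab : ∀ c ∈ C, ¬ Collinear ℝ {a, b, c}) :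
    SimpleLine (insert a (insert b C)) a b := by
  refine ⟨by simp, by simp, hne, ?_⟩
  rintro c (rfl | rfl | hc) h
  exacts [.inl rfl, .inr rfl, (hab c hc h).elim]

theorem not_exists_wedge_insert_insert (hab : ∀ c ∈ C, ¬ Collinear ℝ {a, b, c})
    (ha : ∀ c ∈ C, ∃ d ∈ C, d ≠ c ∧ Collinear ℝ {a, c, d})
    (hb : ∀ c ∈ C, ∃ d ∈ C, d ≠ c ∧ Collinear ℝ {b, c, d}) :
    ¬ ∃ c ∈ insert a (insert b C), c ≠ a ∧ c ≠ b ∧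
      (SimpleLine (insert a (insert b C)) a c ∨ SimpleLine (insert a (insert b C)) b c) := by
  rintro ⟨c, rfl | rfl | hc, hca, hcb, hac | hbc⟩ <;> try contradiction
  · obtain ⟨d, hd, hdc, hacd⟩ := ha c hc
    exact (hac.2.2.2 d (.inr (.inr hd)) hacd).elim (ne₁₃_of_not_collinear (hab d hd)).symm hdc
  · obtain ⟨d, hd, hdc, hbcd⟩ := hb c hc
    exact (hbc.2.2.2 d (.inr (.inr hd)) hbcd).elim (ne₂₃_of_not_collinear (hab d hd)).symm hdc

end InsertInsert

section ConicPolygon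

open Complex ComplexConjugate EuclideanGeometry

/-- The image of `z` under a projective map that sends the line `im = -2`, which misses the unit
circle, to infinity and the line at infinity to the horizontal axis. On the line `im = -2` the value
is junk. -/
noncomputable def conicPoint (z : ℂ) : ℝ × ℝ := (z.re / (z.im + 2), 1 / (z.im + 2))

/-- The common point of the images under `conicPoint` of all chords `zw` of the unit circle with
`z * w = ζ`: it is the image of the point at infinity in the direction `(-im ζ, 1 + re ζ)` of these
chords. For `ζ = -1` they are horizontal, their images are parallel, and the value is junk. -/
noncomputable def chordCenter (ζ : ℂ) : ℝ × ℝ := (-ζ.im / (1 + ζ.re), 0)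

theorem im_add_two_ne_zero {z : ℂ} (hz : ‖z‖ = 1) : z.im + 2 ≠ 0 := by
  have := (abs_le.1 (z.abs_im_le_norm.trans_eq hz)).1
  linarith

theorem re_sq_add_im_sq {z : ℂ} (hz : ‖z‖ = 1) : z.re ^ 2 + z.im ^ 2 = 1 := by
  rw [sq, sq, ← normSq_apply, normSq_eq_norm_sq, hz, one_pow]

theorem one_add_re_ne_zero {ζ : ℂ} (hζ : ‖ζ‖ = 1) (hζ_ne : ζ ≠ -1) : 1 + ζ.re ≠ 0 := by
  intro h
  have h_re : ζ.re = -1 := by linarith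
  have h_im : ζ.im = 0 := by nlinarith [re_sq_add_im_sq hζ]
  exact hζ_ne (Complex.ext (by simpa using h_re) (by simpa using h_im))

theorem conicPoint_injOn : Set.InjOn conicPoint {z | z.im + 2 ≠ 0} := by
  intro z hz w _ h
  obtain ⟨h_fst, h_snd⟩ := Prod.ext_iff.1 h
  have h_im : z.im = w.im := by simpa [conicPoint] using h_snd
  refine Complex.ext ?_ h_im
  simpa [conicPoint, ← h_im, div_left_inj' hz] using h_fst

theorem collinear_of_collinear_conicPoint {z w u : ℂ} (hz : z.im + 2 ≠ 0) (hw : w.im + 2 ≠ 0)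
    (hu : u.im + 2 ≠ 0) (h : Collinear ℝ {conicPoint z, conicPoint w, conicPoint u}) :
    Collinear ℝ {z, w, u} := by
  rw [collinear_triple_iff_mul_eq_mul_s15 (.refl ℝ _)] at h
  rw [collinear_triple_iff_mul_eq_mul_s15 equivRealProdLm]
  simp only [conicPoint, Prod.mk_sub_mk, LinearEquiv.refl_apply, equivRealProdLm_apply, sub_re,
    sub_im] at h ⊢
  field_simp at h
  exact mul_left_cancel₀ hz (by linear_combination -h)

theorem collinear_chordCenter {z w : ℂ} (hz : ‖z‖ = 1) (hw : ‖w‖ = 1) (hzw : z * w ≠ -1) :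
    Collinear ℝ {chordCenter (z * w), conicPoint z, conicPoint w} := by
  have hz_im := im_add_two_ne_zero hz
  have hw_im := im_add_two_ne_zero hw
  have h_re := one_add_re_ne_zero (by rw [norm_mul, hz, hw, one_mul]) hzw
  rw [collinear_triple_iff_mul_eq_mul_s15 (.refl ℝ _)]
  simp only [mul_re, mul_im, conicPoint, chordCenter, Prod.mk_sub_mk, sub_zero,
    LinearEquiv.refl_apply] at h_re ⊢
  field_simp
  linear_combination w.re * re_sq_add_im_sq hz - z.re * re_sq_add_im_sq hw

theorem not_collinear_chordCenter {ζ ξ z : ℂ} (h_ne : chordCenter ζ ≠ chordCenter ξ)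
    (hz : z.im + 2 ≠ 0) : ¬ Collinear ℝ {chordCenter ζ, chordCenter ξ, conicPoint z} := by
  rw [collinear_triple_iff_mul_eq_mul_s15 (.refl ℝ _)]
  simpa [conicPoint, chordCenter, hz, sub_eq_zero, eq_comm (a := -ξ.im / (1 + ξ.re))] using h_ne

theorem chordCenter_conj_ne {ζ : ℂ} (hζ : ‖ζ‖ = 1) (h_one : ζ ≠ 1) (h_neg : ζ ≠ -1) :
    chordCenter ζ ≠ chordCenter (conj ζ) := by
  have h_re := one_add_re_ne_zero hζ h_neg
  intro h
  have h_im : ζ.im = 0 := by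
    have h_fst := congrArg Prod.fst h
    simp only [chordCenter, conj_im, conj_re, neg_neg] at h_fst
    field_simp at h_fst
    linarith
  have h_re_one : ζ.re = 1 :=
    mul_left_cancel₀ h_re (by linear_combination re_sq_add_im_sq hζ - ζ.im * h_im)
  exact h_one (Complex.ext (by simpa using h_re_one) (by simpa using h_im))

/-- The projective image under `conicPoint` of the regular `n`-gon of `n`-th roots of unity. -/
def conicPolygon (n : ℕ) : Set (ℝ × ℝ) := conicPoint '' {z | z ^ n = 1}

theorem noThreeCollinear_conicPolygon {n : ℕ} (hn : n ≠ 0) :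
    NoThreeCollinear ℝ (conicPolygon n) := by
  have h_cosph : Cospherical {z : ℂ | z ^ n = 1} :=
    ⟨0, 1, fun z hz ↦ by rw [dist_zero_right, norm_eq_one_of_pow_eq_one hz hn]⟩
  have h_im {z : ℂ} (hz : z ^ n = 1) := im_add_two_ne_zero (norm_eq_one_of_pow_eq_one hz hn)
  rintro _ ⟨z, hz, rfl⟩ _ ⟨w, hw, rfl⟩ _ ⟨u, hu, rfl⟩ hzw hzu hwu h
  refine affineIndependent_iff_not_collinear_set.1 ?_
    (collinear_of_collinear_conicPoint (h_im hz) (h_im hw) (h_im hu) h)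
  exact h_cosph.affineIndependent_of_mem_of_ne hz hw hu
    (ne_of_apply_ne _ hzw) (ne_of_apply_ne _ hzu) (ne_of_apply_ne _ hwu)

theorem setOf_pow_eq_one_eq_nthRootsFinset {R : Type*} [CommRing R] [IsDomain R] {n : ℕ}
    (hn : n ≠ 0) : {x : R | x ^ n = 1} = Polynomial.nthRootsFinset n (1 : R) :=
  Set.ext fun _ ↦ (Polynomial.mem_nthRootsFinset (Nat.pos_of_ne_zero hn) 1).symm

theorem finite_conicPolygon {n : ℕ} (hn : n ≠ 0) : (conicPolygon n).Finite := by
  rw [conicPolygon, setOf_pow_eq_one_eq_nthRootsFinset hn]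
  exact (Finset.finite_toSet _).image _

theorem ncard_conicPolygon {n : ℕ} (hn : n ≠ 0) : (conicPolygon n).ncard = n := by
  have h_inj : Set.InjOn conicPoint {z | z ^ n = 1} :=
    conicPoint_injOn.mono fun _ hz ↦ im_add_two_ne_zero (norm_eq_one_of_pow_eq_one hz hn)
  rw [conicPolygon, h_inj.ncard_image, setOf_pow_eq_one_eq_nthRootsFinset hn,
    Set.ncard_coe_finset, (isPrimitiveRoot_exp n hn).card_nthRootsFinset]

theorem exists_ne_collinear_chordCenter {k : ℕ} (hk : k ≠ 0) {ζ : ℂ} (hζ : ζ ^ (2 * k) = 1)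
    (hζ_odd : ζ ^ k ≠ 1) (hζ_neg : ζ ≠ -1) {c : ℝ × ℝ} (hc : c ∈ conicPolygon (2 * k)) :
    ∃ d ∈ conicPolygon (2 * k), d ≠ c ∧ Collinear ℝ {chordCenter ζ, c, d} := by
  have hn : 2 * k ≠ 0 := by positivity
  obtain ⟨z, hz, rfl⟩ := hc
  have hz_ne : z ≠ 0 := by rintro rfl; simp [hn] at hz
  have hw : (ζ / z) ^ (2 * k) = 1 := by rw [div_pow, hζ, hz, div_one]
  have hz_norm := norm_eq_one_of_pow_eq_one hz hn
  have hw_norm := norm_eq_one_of_pow_eq_one hw hn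
  have h_mul : z * (ζ / z) = ζ := mul_div_cancel₀ ζ hz_ne
  refine ⟨_, ⟨ζ / z, hw, rfl⟩, fun h ↦ hζ_odd ?_, ?_⟩
  · have h_fix : ζ / z = z :=
      conicPoint_injOn (im_add_two_ne_zero hw_norm) (im_add_two_ne_zero hz_norm) h
    rw [← h_mul, h_fix, ← sq, ← pow_mul, hz]
  · have := collinear_chordCenter hz_norm hw_norm (h_mul.trans_ne hζ_neg)
    rwa [h_mul] at this

theorem exists_chordCenters_conicPolygon {k : ℕ} (hk : 2 ≤ k) :
    ∃ a b : ℝ × ℝ, a ≠ b ∧ (∀ c ∈ conicPolygon (2 * k), ¬ Collinear ℝ {a, b, c}) ∧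
      (∀ c ∈ conicPolygon (2 * k), ∃ d ∈ conicPolygon (2 * k), d ≠ c ∧ Collinear ℝ {a, c, d}) ∧
      ∀ c ∈ conicPolygon (2 * k), ∃ d ∈ conicPolygon (2 * k), d ≠ c ∧ Collinear ℝ {b, c, d} := by
  have hk0 : k ≠ 0 := by omega
  have hn : 2 * k ≠ 0 := by omega
  obtain ⟨ζ, hζ⟩ : ∃ ζ : ℂ, IsPrimitiveRoot ζ (2 * k) := ⟨_, isPrimitiveRoot_exp (2 * k) hn⟩
  have hζ_odd : ζ ^ k ≠ 1 := hζ.pow_ne_one_of_pos_of_lt hk0 (by omega)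
  have hζ_neg : ζ ≠ -1 := fun h ↦ hζ.pow_ne_one_of_pos_of_lt two_ne_zero (by omega) (by simp [h])
  have h_ne : chordCenter ζ ≠ chordCenter (conj ζ) :=
    chordCenter_conj_ne (norm_eq_one_of_pow_eq_one hζ.pow_eq_one hn) (hζ.ne_one (by omega)) hζ_neg
  refine ⟨chordCenter ζ, chordCenter (conj ζ), h_ne, ?_, ?_, ?_⟩
  · rintro _ ⟨z, hz, rfl⟩
    exact not_collinear_chordCenter h_ne (im_add_two_ne_zero (norm_eq_one_of_pow_eq_one hz hn))
  · exact fun c ↦ exists_ne_collinear_chordCenter hk0 hζ.pow_eq_one hζ_odd hζ_neg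
  · refine fun c ↦ exists_ne_collinear_chordCenter hk0 ?_ ?_ ?_
    · rw [← map_pow, hζ.pow_eq_one, map_one]
    · rwa [← map_pow, (map_eq_one_iff _ (starRingEnd ℂ).injective).ne]
    · rwa [ne_eq, ← map_one conj, ← map_neg, (starRingEnd ℂ).injective.eq_iff]

end ConicPolygon

theorem even_size_no_wedge_from_some_simple_line_general (n : ℕ) (hn : Even n) (h6 : 6 ≤ n) :
    ∃ V : Set (ℝ × ℝ), V.Finite ∧ V.ncard = n ∧ ThreeBounded V ∧
      ¬ Collinear ℝ V ∧
      ∃ a b, SimpleLine V a b ∧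
        ¬ ∃ c ∈ V, c ≠ a ∧ c ≠ b ∧ (SimpleLine V a c ∨ SimpleLine V b c) := by
  obtain ⟨k, hk, rfl⟩ : ∃ k, 2 ≤ k ∧ n = 2 * k + 2 := by
    obtain ⟨m, rfl⟩ := hn
    exact ⟨m - 1, by omega, by omega⟩
  have hk0 : 2 * k ≠ 0 := by omega
  have h_fin := finite_conicPolygon hk0
  have h_card := ncard_conicPolygon hk0
  have h_nonempty : (conicPolygon (2 * k)).Nonempty := Set.nonempty_of_ncard_ne_zero (by omega)
  obtain ⟨a, b, h_ne, hab, ha, hb⟩ := exists_chordCenters_conicPolygon hk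
  exact ⟨insert a (insert b (conicPolygon (2 * k))), (h_fin.insert b).insert a,
    by rw [ncard_insert_insert h_fin h_ne hab, h_card],
    threeBounded_insert_insert (noThreeCollinear_conicPolygon hk0) hab,
    not_collinear_insert_insert h_nonempty hab, a, b, simpleLine_insert_insert h_ne hab,
    not_exists_wedge_insert_insert hab ha hb⟩

/-- For every even `n > 6` there is a `3`-bounded
non-collinear set `V` of `n` points and a simple line `L_{a,b}` of `V` from
which no simple wedge can be created. -/
theorem even_size_no_wedge_from_some_simple_line (n : ℕ) (hn : Even n) (h6 : 6 < n) :
    ∃ V : Set (ℝ × ℝ), V.Finite ∧ V.ncard = n ∧ ThreeBounded V ∧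
      ¬ Collinear ℝ V ∧
      ∃ a b, SimpleLine V a b ∧
        ¬ ∃ c ∈ V, c ≠ a ∧ c ≠ b ∧ (SimpleLine V a c ∨ SimpleLine V b c) :=
  even_size_no_wedge_from_some_simple_line_general n hn h6.le
end
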